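/- Let d₀ ≥ 2, M = 𝕋^{d₀} = ℝ^{d₀}/ℤ^{d₀} with normalized Haar measure ν and quotient metric d, and let T be the algebraic automorphism of 𝕋^{d₀} induced by S ∈ SL_{d₀}(ℤ) none of whose eigenvalues is a root of unity. Let η > 0 and let f : M → ℝ be bounded, η-Hölder continuous, with ∫_M f dν = 0. Then ξ_k := f∘T^k (k ∈ ℤ, on the probability space (M, ν)) satisfies: (3) (ξ_k) is stationary, centered, with finite fourth moments; (4) Σ_{p≥0} √(1+p) |∫ f·(f∘T^p) dν| < ∞ and sup_{N≥1} N^{−2} Σ_{k₁,k₂,k₃,k₄=0}^{N−1} |∫ Π_{j=1}^4 f∘T^{k_j} dν| < ∞; (5) there exist C > 0, nonnegative reals (φ_{p,s})_{p,s∈ℕ} and an integer r ≥ 1 with φ_{p+1,s} ≤ φ_{p,s}, lim_{s→∞} √s φ_{rs,s} = 0, and for all 0 ≤ n₁ ≤ n₂ ≤ n₃ ≤ n₄ and all reals α_{n₁},...,α_{n₂}, β_{n₃},...,β_{n₄}: |Cov_ν(exp(i Σ_{k=n₁}^{n₂} α_k f∘T^k), exp(i Σ_{k=n₃}^{n₄}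 β_k f∘T^k))| ≤ C(1 + Σ|α_k| + Σ|β_k|) φ_{n₃−n₂, n₄−n₃}. -/

import Mathlib

open MeasureTheory ProbabilityTheory Filter

noncomputable section

/-- Number of visits of the walk `S` to site `k` among times `1,...,n` (local time). -/
def localTime {Ω : Type*} (S : ℕ → Ω → ℤ) (n : ℕ) (k : ℤ) (ω : Ω) : ℝ :=
  ((Finset.Icc 1 n).filter (fun j => S j ω = k)).card

/-- `S` is a simple symmetric random walk on `ℤ`: `S 0 = 0` and the increments are
i.i.d. uniform on `{-1, 1}`. -/
structure IsSSRW {Ω : Type*} [MeasurableSpace Ω] (μ : Measure Ω) (S : ℕ → Ω → ℤ) : Prop where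
  meas : ∀ n, Measurable (S n)
  init : ∀ ω, S 0 ω = 0
  indep : iIndepFun (fun n ω => S (n + 1) ω - S n ω) μ
  step_one : ∀ n, μ {ω | S (n + 1) ω - S n ω = 1} = 1 / 2
  step_neg_one : ∀ n, μ {ω | S (n + 1) ω - S n ω = -1} = 1 / 2

/-- Stationarity of the sequence `(ξ k)_{k ∈ ℤ}`: all finite dimensional distributions
are invariant under a shift of the index. -/
def IsStationarySeq {Ω : Type*} [MeasurableSpace Ω] (μ : Measure Ω) (ξ : ℤ → Ω → ℝ) : Prop :=
  ∀ (j : ℤ) (q : ℕ) (k : Fin q → ℤ),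
    Measure.map (fun ω i => ξ (k i + j) ω) μ = Measure.map (fun ω i => ξ (k i) ω) μ

/-- Covariance of two complex-valued random variables. -/
def covC {Ω : Type*} [MeasurableSpace Ω] (μ : Measure Ω) (U V : Ω → ℂ) : ℂ :=
  ∫ ω, U ω * V ω ∂μ - (∫ ω, U ω ∂μ) * (∫ ω, V ω ∂μ)

/-- Condition (3): `(ξ k)` is stationary, centered, with finite fourth moments. -/
def Cond3 {Ω : Type*} [MeasurableSpace Ω] (μ : Measure Ω) (ξ : ℤ → Ω → ℝ) : Prop :=
  IsStationarySeq μ ξ ∧ (∀ k, ∫ ω, ξ k ω ∂μ = 0) ∧ ∀ k, Integrable (fun ω => (ξ k ω) ^ 4) μ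

/-- Condition (4). -/
def Cond4 {Ω : Type*} [MeasurableSpace Ω] (μ : Measure Ω) (ξ : ℤ → Ω → ℝ) : Prop :=
  Summable (fun p : ℕ => Real.sqrt (1 + (p : ℝ)) * |∫ ω, ξ 0 ω * ξ (p : ℤ) ω ∂μ|) ∧
  ∃ B : ℝ, ∀ N : ℕ, 1 ≤ N →
    ∑ k₁ ∈ Finset.range N, ∑ k₂ ∈ Finset.range N, ∑ k₃ ∈ Finset.range N,
      ∑ k₄ ∈ Finset.range N,
        |∫ ω, ξ (k₁ : ℤ) ω * ξ (k₂ : ℤ) ω * ξ (k₃ : ℤ) ω * ξ (k₄ : ℤ) ω ∂μ| ≤ B * (N : ℝ) ^ 2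

/-- The covariance inequality of condition (5), for a given constant `C` and
family `φ`. -/
def Cond5Bound {Ω : Type*} [MeasurableSpace Ω] (μ : Measure Ω) (ξ : ℤ → Ω → ℝ)
    (C : ℝ) (φ : ℕ → ℕ → ℝ) : Prop :=
  ∀ n₁ n₂ n₃ n₄ : ℕ, n₁ ≤ n₂ → n₂ ≤ n₃ → n₃ ≤ n₄ → ∀ α β : ℕ → ℝ,
    ‖covC μ
        (fun ω => Complex.exp (Complex.I * ((∑ k ∈ Finset.Icc n₁ n₂, α k * ξ (k : ℤ) ω : ℝ) : ℂ)))
        (fun ω => Complex.exp (Complex.I * ((∑ k ∈ Finset.Icc n₃ n₄, β k * ξ (k : ℤ) ω : ℝ) : ℂ)))‖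
      ≤ C * (1 + ∑ k ∈ Finset.Icc n₁ n₂, |α k| + ∑ k ∈ Finset.Icc n₃ n₄, |β k|) *
          φ (n₃ - n₂) (n₄ - n₃)

/-- Condition (5). -/
def Cond5 {Ω : Type*} [MeasurableSpace Ω] (μ : Measure Ω) (ξ : ℤ → Ω → ℝ) : Prop :=
  ∃ C : ℝ, 0 < C ∧ ∃ (φ : ℕ → ℕ → ℝ) (r : ℕ), 1 ≤ r ∧
    (∀ p s, 0 ≤ φ p s) ∧ (∀ p s, φ (p + 1) s ≤ φ p s) ∧
    Tendsto (fun s : ℕ => Real.sqrt s * φ (r * s) s) atTop (nhds 0) ∧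
    Cond5Bound μ ξ C φ

/-- The iterate `T^k` for `k ∈ ℤ` of an invertible transformation `T`
with inverse `Tinv`. -/
def Titer {M : Type*} (T Tinv : M → M) : ℤ → M → M
  | Int.ofNat n => T^[n]
  | Int.negSucc n => Tinv^[n + 1]

open scoped ENNReal
/-- The `d`-dimensional torus `ℝ^d/ℤ^d`, realised as `(ℝ/ℤ)^d`; it carries the product
(normalised Haar) measure `volume`. -/
abbrev Torus (d : ℕ) : Type := Fin d → AddCircle (1 : ℝ)

/-- The quotient metric on the torus induced by the Euclidean metric on `ℝ^d`
(here `‖·‖` is the quotient norm on `ℝ/ℤ`). -/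
def torusDist {d : ℕ} (x y : Torus d) : ℝ := Real.sqrt (∑ i, ‖x i - y i‖ ^ 2)

/-- The algebraic endomorphism of the torus induced by an integer matrix `S`. -/
def torusAut {d : ℕ} (S : Matrix (Fin d) (Fin d) ℤ) (x : Torus d) : Torus d :=
  fun i => ∑ j, S i j • x j

/-- `S` has no eigenvalue which is a root of unity. -/
def NoRootOfUnityEigenvalue {d : ℕ} (S : Matrix (Fin d) (Fin d) ℤ) : Prop :=
  ∀ z : ℂ, (Matrix.charpoly (S.map (fun a => (a : ℂ)))).IsRoot z →
    ∀ n : ℕ, n ≠ 0 → z ^ n ≠ 1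

/-- The η-Hölder constant `C_g^{(η)}` of `g` (with value `∞` if `g` is not η-Hölder),
for the Euclidean quotient metric on the torus. -/
def holderC {d : ℕ} (η : ℝ) (g : Torus d → ℂ) : ℝ≥0∞ :=
  ⨆ (x : Torus d) (y : Torus d) (_ : x ≠ y),
    ENNReal.ofReal (‖g x - g y‖ / torusDist x y ^ η)

/-- A real function on the torus is η-Hölder continuous (for the Euclidean quotient
metric). -/
def IsHolder {d : ℕ} (η : ℝ) (f : Torus d → ℝ) : Prop :=
  ∃ c : ℝ, ∀ x y : Torus d, |f x - f y| ≤ c * torusDist x y ^ η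

/-- A generalized eigenvector of an invertible matrix for an eigenvalue outside the closed unit
disc is contracted exponentially fast by the iterates of the inverse matrix. -/
lemma exists_norm_inv_pow_mulVec_le {d : ℕ} (A B : Matrix (Fin d) (Fin d) ℂ) (hBA : B * A = 1)
    (z : ℂ) (r : ℝ) (hz : 1 < ‖z‖) (hr : ‖z‖⁻¹ < r) (m : ℕ) :
    ∀ u : Fin d → ℂ, Matrix.mulVec ((A - Matrix.scalar (Fin d) z) ^ m) u = 0 →
      ∃ C : ℝ, ∀ j : ℕ, ‖Matrix.mulVec (B ^ j) u‖ ≤ C * r ^ j := by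
  have hr0 : 0 < r := lt_of_le_of_lt (by positivity) hr
  have hz0 : z ≠ 0 := by
    rintro rfl
    simp at hz
    linarith
  induction m with
  | zero =>
    intro u hu
    refine ⟨0, fun j => ?_⟩
    have : u = 0 := by simpa using hu
    simp [this]
  | succ m ih =>
    intro u hu
    set u' := Matrix.mulVec (A - Matrix.scalar (Fin d) z) u with hu'
    obtain ⟨C, hC⟩ := ih u' (by rw [hu', Matrix.mulVec_mulVec, ← pow_succ]; exact hu)
    have hrec : ∀ j : ℕ, Matrix.mulVec (B ^ (j + 1)) u
        = z⁻¹ • (Matrix.mulVec (B ^ j) u - Matrix.mulVec (B ^ (j + 1)) u') := by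
      intro j
      have h1 : B ^ (j + 1) * (A - Matrix.scalar (Fin d) z) = B ^ j - z • B ^ (j + 1) := by
        rw [mul_sub, Matrix.scalar_apply, ← Matrix.smul_eq_mul_diagonal, pow_succ, mul_assoc, hBA,
          mul_one]
      rw [hu', Matrix.mulVec_mulVec, h1, Matrix.sub_mulVec, Matrix.smul_mulVec, sub_sub_cancel,
        smul_smul, inv_mul_cancel₀ hz0, one_smul]
    have hC0 : 0 ≤ C := by simpa using (norm_nonneg _).trans (hC 0)
    have hgap : 0 < r - ‖z‖⁻¹ := by linarith
    refine ⟨‖u‖ + C * r / (r - ‖z‖⁻¹), fun j => ?_⟩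
    set D := ‖u‖ + C * r / (r - ‖z‖⁻¹) with hD
    have hD0 : C * r / (r - ‖z‖⁻¹) ≤ D := by rw [hD]; linarith [norm_nonneg u]
    induction j with
    | zero =>
      have : 0 ≤ C * r / (r - ‖z‖⁻¹) := by positivity
      simpa [hD] using this
    | succ j ihj =>
      have hzi : ‖z‖⁻¹ ≤ 1 := inv_le_one_of_one_le₀ hz.le
      rw [hrec, norm_smul, norm_inv]
      rw [div_le_iff₀ hgap] at hD0
      calc ‖z‖⁻¹ * ‖Matrix.mulVec (B ^ j) u - Matrix.mulVec (B ^ (j + 1)) u'‖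
          ≤ ‖z‖⁻¹ * (D * r ^ j + C * r ^ (j + 1)) := by
            gcongr
            exact (norm_sub_le _ _).trans (add_le_add ihj (hC _))
        _ = (‖z‖⁻¹ * D + ‖z‖⁻¹ * (C * r)) * r ^ j := by ring
        _ ≤ (‖z‖⁻¹ * D + 1 * (C * r)) * r ^ j := by gcongr
        _ ≤ (D * r) * r ^ j := by gcongr; linarith
        _ = D * r ^ (j + 1) := by ring

/-- Liouville-type lower bound: a nonzero algebraic integer all of whose conjugates are bounded
by `B` cannot be too small. -/
lemma one_le_norm_embedding_mul_pow {K : Type*} [Field K] [NumberField K] {y : K} (hy : y ≠ 0)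
    (hInt : IsIntegral ℤ y) {B : ℝ} (hB : ∀ σ : K →ₐ[ℚ] ℂ, ‖σ y‖ ≤ B) (σ₀ : K →ₐ[ℚ] ℂ) :
    1 ≤ ‖σ₀ y‖ * B ^ (Fintype.card (K →ₐ[ℚ] ℂ) - 1) := by
  classical
  have hprod := congrArg norm (Algebra.norm_eq_prod_embeddings ℚ ℂ y)
  obtain ⟨k, hk⟩ := IsIntegrallyClosed.isIntegral_iff.1 (Algebra.isIntegral_norm ℚ hInt)
  have hk0 : k ≠ 0 := by
    rintro rfl
    exact hy ((Algebra.norm_eq_zero_iff (R := ℚ)).1 (by rw [← hk, map_zero]))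
  have hone : (1 : ℝ) ≤ ‖algebraMap ℚ ℂ (Algebra.norm ℚ y)‖ := by
    rw [← hk]
    simpa using (by exact_mod_cast Int.one_le_abs hk0 : (1 : ℝ) ≤ |(k : ℝ)|)
  rw [hprod, norm_prod, ← Finset.mul_prod_erase _ _ (Finset.mem_univ σ₀)] at hone
  refine hone.trans ?_
  gcongr
  calc ∏ σ ∈ Finset.univ.erase σ₀, ‖σ y‖ ≤ ∏ _σ ∈ Finset.univ.erase σ₀, B := by
        gcongr with σ
        exact hB σ
    _ = B ^ (Fintype.card (K →ₐ[ℚ] ℂ) - 1) := by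
        rw [Finset.prod_const, Finset.card_erase_of_mem (Finset.mem_univ _), Finset.card_univ]

lemma isIntegral_of_isRoot_charpoly {K : Type*} [Field K] {d : ℕ} (S : Matrix (Fin d) (Fin d) ℤ)
    {c : K} (hc : ((Int.castRingHom K).mapMatrix S).charpoly.IsRoot c) : IsIntegral ℤ c := by
  refine ⟨S.charpoly, S.charpoly_monic, ?_⟩
  rw [RingHom.mapMatrix_apply, Matrix.charpoly_map, Polynomial.IsRoot.def,
    Polynomial.eval_map] at hc
  exact hc

/-- Over a field where the characteristic polynomial of an integer matrix splits, the identity is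
a combination of matrices with integral entries, each of which maps into a single generalized
eigenspace. -/
lemma exists_integral_spectral_factors {K : Type*} [Field K] {d : ℕ} (hd : 0 < d)
    (S : Matrix (Fin d) (Fin d) ℤ)
    (hsplit : ((Int.castRingHom K).mapMatrix S).charpoly.Splits) :
    ∃ (t : Finset K) (M N : K → Matrix (Fin d) (Fin d) K),
      (∀ c ∈ t, ((Int.castRingHom K).mapMatrix S).charpoly.IsRoot c) ∧
      (∀ c ∈ t, ∃ m : ℕ,
        ((Int.castRingHom K).mapMatrix S - Matrix.scalar (Fin d) c) ^ m * M c = 0) ∧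
      (∀ c ∈ t, ∀ i j, IsIntegral ℤ (M c i j)) ∧
      ∑ c ∈ t, M c * N c = 1 := by
  classical
  set A := (Int.castRingHom K).mapMatrix S with hA
  have hmonic := A.charpoly_monic
  have hA0 : A.charpoly ≠ 0 := hmonic.ne_zero
  set t := A.charpoly.roots.toFinset with ht
  let s : K → Polynomial K := fun c =>
    (Polynomial.X - Polynomial.C c) ^ (A.charpoly.roots.count c)
  have hroot : ∀ c ∈ t, A.charpoly.IsRoot c := fun c hc => by
    rw [ht, Multiset.mem_toFinset] at hc
    exact (Polynomial.mem_roots hA0).1 hc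
  have hprod : ∏ c ∈ t, s c = A.charpoly := by
    conv_rhs => rw [hsplit.eq_prod_roots_of_monic hmonic]
    rw [Finset.prod_multiset_map_count]
  have heval : ∀ c, Polynomial.aeval A (s c)
      = (A - Matrix.scalar (Fin d) c) ^ (A.charpoly.roots.count c) := fun c => by
    simp only [s, map_pow, map_sub, Polynomial.aeval_X, Polynomial.aeval_C]
    rfl
  have hIntS : ∀ c, IsIntegral ℤ c →
      A - Matrix.scalar (Fin d) c ∈ (integralClosure ℤ K).matrix := fun c hc => by
    refine sub_mem (fun i j => ?_) (fun i j => ?_)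
    · simp [hA]
    · by_cases h : i = j
      · subst h
        simpa [mem_integralClosure_iff] using hc
      · simp [h]
  have hInt : ∀ c ∈ t, IsIntegral ℤ c := fun c hc =>
    isIntegral_of_isRoot_charpoly S (hroot c hc)
  obtain ⟨ν, hν⟩ : ∃ ν : K → Polynomial K, ∑ c ∈ t, ν c * ∏ j ∈ t \ {c}, s j = 1 := by
    have hne : t.Nonempty := by
      rw [ht, Multiset.toFinset_nonempty, ← Multiset.card_pos, ← hsplit.natDegree_eq_card_roots,
        Matrix.charpoly_natDegree_eq_dim, Fintype.card_fin]
      exact hd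
    refine (exists_sum_eq_one_iff_pairwise_coprime hne).2 fun a b hab => ?_
    exact (Polynomial.isCoprime_X_sub_C_of_isUnit_sub
      (sub_ne_zero.2 (fun h => hab (Subtype.ext h))).isUnit).pow
  refine ⟨t, fun c => Polynomial.aeval A (∏ j ∈ t \ {c}, s j), fun c => Polynomial.aeval A (ν c),
    hroot, fun c hc => ⟨A.charpoly.roots.count c, ?_⟩, fun c hc => ?_, ?_⟩
  · rw [← heval, ← map_mul, Finset.sdiff_singleton_eq_erase,
      Finset.mul_prod_erase t s hc, hprod, Matrix.aeval_self_charpoly]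
  · have : Polynomial.aeval A (∏ j ∈ t \ {c}, s j) ∈ (integralClosure ℤ K).matrix := by
      refine Finset.prod_induction _ (fun q => Polynomial.aeval A q ∈ (integralClosure ℤ K).matrix)
        (fun p q hp hq => by rw [map_mul]; exact mul_mem hp hq)
        (by rw [map_one]; exact one_mem _) fun j hj => ?_
      rw [heval]
      exact pow_mem (hIntS j (hInt j (Finset.mem_sdiff.1 hj).1)) _
    exact this
  · have := congrArg (Polynomial.aeval A) hν
    simp only [map_sum, map_one] at this
    rw [← this]
    exact Finset.sum_congr rfl fun c _ => by rw [← map_mul, mul_comm]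

/-- By the Kronecker theorem, every eigenvalue of `S` has a conjugate outside the unit disc. -/
lemma exists_one_lt_norm_embedding {K : Type*} [Field K] [NumberField K] {d : ℕ}
    (S : Matrix (Fin d) (Fin d) ℤ) (hdet : S.det = 1) (hEig : NoRootOfUnityEigenvalue S) {c : K}
    (hc : ((Int.castRingHom K).mapMatrix S).charpoly.IsRoot c) :
    ∃ σ : K →ₐ[ℚ] ℂ, 1 < ‖σ c‖ := by
  by_contra! hle
  have hc0 : c ≠ 0 := by
    rintro rfl
    have h := Matrix.det_eq_sign_charpoly_coeff ((Int.castRingHom K).mapMatrix S)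
    rw [Polynomial.coeff_zero_eq_eval_zero, hc.eq_zero, ← RingHom.map_det, hdet] at h
    simp at h
  obtain ⟨k, hk, hck⟩ := NumberField.Embeddings.pow_eq_one_of_norm_le_one K ℂ hc0
    (isIntegral_of_isRoot_charpoly S hc) fun φ => hle φ.toRatAlgHom
  let σ : K →+* ℂ := (IsAlgClosed.lift : K →ₐ[ℚ] ℂ).toRingHom
  refine hEig (σ c) ?_ k hk.ne' (by rw [← map_pow, hck, map_one])
  have h := hc.map (f := σ)
  rw [← Matrix.charpoly_map] at h
  convert h using 2
  ext i j
  simp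

/-- The expanding directions of `S` are uniformly transverse, up to a polynomial loss, to the
kernels of nonzero integer linear forms. -/
lemma exists_contracted_vector_of_splits (K : Type*) [Field K] [NumberField K] {d : ℕ}
    (hd : 0 < d) (S : Matrix (Fin d) (Fin d) ℤ) (hdet : S.det = 1)
    (hEig : NoRootOfUnityEigenvalue S)
    (hsplit : ((Int.castRingHom K).mapMatrix S).charpoly.Splits) :
    ∃ (C : ℝ) (m : ℕ) (ρ : ℝ), 0 ≤ C ∧ 0 < ρ ∧ ρ < 1 ∧ ∀ n : Fin d → ℤ, n ≠ 0 →
      ∃ w : Fin d → ℝ, ∑ i, (n i : ℝ) * w i = 1 / 2 ∧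
        ∀ j : ℕ, ‖Matrix.mulVec ((S⁻¹ ^ j).map (Int.cast : ℤ → ℝ)) w‖
          ≤ C * (∑ i, |(n i : ℝ)|) ^ m * ρ ^ j := by
  classical
  obtain ⟨t, M, N, hroot, hgen, hInt, hsum⟩ := exists_integral_spectral_factors hd S hsplit
  set A := (Int.castRingHom ℂ).mapMatrix S with hA
  set B := (Int.castRingHom ℂ).mapMatrix S⁻¹ with hB
  have hBA : B * A = 1 := by
    rw [hA, hB, ← map_mul, Matrix.nonsing_inv_mul S (by rw [hdet]; exact isUnit_one), map_one]
  let u : t × (K →ₐ[ℚ] ℂ) × Fin d → Fin d → ℂ := fun p k => p.2.1 (M p.1 k p.2.2)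
  have hu : ∀ p : t × (K →ₐ[ℚ] ℂ) × Fin d, ∃ m : ℕ,
      Matrix.mulVec ((A - Matrix.scalar (Fin d) (p.2.1 (p.1 : K))) ^ m) (u p) = 0 := by
    rintro ⟨⟨c, hc⟩, σ, i⟩
    obtain ⟨m, hm⟩ := hgen c hc
    refine ⟨m, ?_⟩
    have h1 := congrArg σ.toRingHom.mapMatrix hm
    rw [map_mul, map_pow, map_sub, map_zero] at h1
    have h2 : σ.toRingHom.mapMatrix ((Int.castRingHom K).mapMatrix S) = A := by
      ext a b
      simp [hA]
    have h3 : σ.toRingHom.mapMatrix (Matrix.scalar (Fin d) c) = Matrix.scalar (Fin d) (σ c) := by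
      ext a b
      by_cases h : a = b <;> simp [h]
    rw [h2, h3] at h1
    funext k
    have h4 := congrFun (congrFun h1 k) i
    rw [Matrix.mul_apply] at h4
    exact h4
  have hev : ∀ᶠ r : ℝ in nhdsWithin 1 (Set.Iio 1), ∀ p : t × (K →ₐ[ℚ] ℂ) × Fin d,
      1 < ‖p.2.1 (p.1 : K)‖ → ∃ C : ℝ, ∀ j : ℕ, ‖Matrix.mulVec (B ^ j) (u p)‖ ≤ C * r ^ j := by
    refine eventually_all.2 fun p => ?_
    by_cases hp : 1 < ‖p.2.1 (p.1 : K)‖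
    · filter_upwards [Ioo_mem_nhdsLT (inv_lt_one_of_one_lt₀ hp)] with r hr _
      obtain ⟨m, hm⟩ := hu p
      exact exists_norm_inv_pow_mulVec_le A B hBA _ r hp hr.1 m _ hm
    · exact Eventually.of_forall fun r h => absurd h hp
  obtain ⟨r, hr, hr0, hr1⟩ := (hev.and (Ioo_mem_nhdsLT (zero_lt_one' ℝ))).exists
  choose! C hC using hr
  set C₀ := ∑ p, |C p| with hC₀
  set B₀ := ∑ p, ∑ k, ‖u p k‖ with hB₀
  have hB₀u : ∀ p k, ‖u p k‖ ≤ B₀ := fun p k =>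
    (Finset.single_le_sum (f := fun k => ‖u p k‖) (fun _ _ => norm_nonneg _)
      (Finset.mem_univ k)).trans
    (Finset.single_le_sum (f := fun p => ∑ k, ‖u p k‖)
      (fun _ _ => Finset.sum_nonneg fun _ _ => norm_nonneg _) (Finset.mem_univ p))
  have hC₀0 : 0 ≤ C₀ := Finset.sum_nonneg fun _ _ => abs_nonneg _
  have hB₀0 : 0 ≤ B₀ := Finset.sum_nonneg fun _ _ => Finset.sum_nonneg fun _ _ => norm_nonneg _
  set m := Fintype.card (K →ₐ[ℚ] ℂ) - 1 with hm
  refine ⟨C₀ * B₀ ^ m, m, r, by positivity, hr0, hr1, fun n hn => ?_⟩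
  obtain ⟨c, hc, i, hy⟩ : ∃ c ∈ t, ∃ i, ∑ k, (n k : K) * M c k i ≠ 0 := by
    by_contra! hzero
    apply hn
    have h1 : Matrix.vecMul (fun k => (n k : K)) (∑ c ∈ t, M c * N c) = 0 := by
      rw [Matrix.vecMul_sum]
      refine Finset.sum_eq_zero fun c hc => ?_
      have : Matrix.vecMul (fun k => (n k : K)) (M c) = 0 := funext fun i => hzero c hc i
      rw [← Matrix.vecMul_vecMul, this, Matrix.zero_vecMul]
    rw [hsum, Matrix.vecMul_one] at h1
    funext k
    simpa using congrFun h1 k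
  obtain ⟨σ, hσ⟩ := exists_one_lt_norm_embedding S hdet hEig (hroot c hc)
  have hσy : ∀ τ : K →ₐ[ℚ] ℂ, τ (∑ k, (n k : K) * M c k i)
      = ∑ k, (n k : ℂ) * u (⟨c, hc⟩, τ, i) k := fun τ => by simp [u]
  have hlow := one_le_norm_embedding_mul_pow hy
    (IsIntegral.sum _ fun k _ => (isIntegral_algebraMap (R := ℤ) (x := n k)).mul (hInt c hc k i))
    (B := (∑ i, |(n i : ℝ)|) * B₀) (fun τ => by
      rw [hσy, Finset.sum_mul]
      refine (norm_sum_le _ _).trans (Finset.sum_le_sum fun k _ => ?_)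
      rw [norm_mul, Complex.norm_intCast]
      gcongr
      exact hB₀u _ _) σ
  rw [← hm, hσy] at hlow
  set p : t × (K →ₐ[ℚ] ℂ) × Fin d := (⟨c, hc⟩, σ, i) with hp
  set y : ℂ := ∑ k, (n k : ℂ) * u p k with hydef
  have hy0 : y ≠ 0 := by
    intro h
    rw [h] at hlow
    simp at hlow
    linarith
  have hCp : ∀ j : ℕ, ‖Matrix.mulVec (B ^ j) (u p)‖ ≤ C₀ * r ^ j := fun j => by
    refine (hC p hσ j).trans ?_
    gcongr
    exact (le_abs_self _).trans
      (Finset.single_le_sum (f := fun p => |C p|) (fun _ _ => abs_nonneg _) (Finset.mem_univ p))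
  refine ⟨fun k => (u p k / (2 * y)).re, ?_, fun j => ?_⟩
  · have : ∑ k, (n k : ℂ) * (u p k / (2 * y)) = 1 / 2 := by
      have : ∑ k, (n k : ℂ) * (u p k / (2 * y)) = y / (2 * y) := by
        rw [hydef, Finset.sum_div]
        exact Finset.sum_congr rfl fun k _ => by rw [mul_div_assoc]
      rw [this]
      field_simp
    have h2 := congrArg Complex.re this
    rw [Complex.re_sum] at h2
    have h3 : (1 / 2 : ℂ).re = 1 / 2 := by norm_num
    rw [h3] at h2
    rw [← h2]
    exact Finset.sum_congr rfl fun k _ => by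
      rw [← Complex.ofReal_intCast, Complex.re_ofReal_mul]
  · have hpos : 0 ≤ C₀ * B₀ ^ m * (∑ i, |(n i : ℝ)|) ^ m * r ^ j := by positivity
    refine (pi_norm_le_iff_of_nonneg hpos).2 fun k => ?_
    have h1 : Matrix.mulVec ((S⁻¹ ^ j).map (Int.cast : ℤ → ℝ)) (fun k => (u p k / (2 * y)).re) k
        = (Matrix.mulVec (B ^ j) (u p) k / (2 * y)).re := by
      rw [hB, ← map_pow, Matrix.mulVec, Matrix.mulVec, dotProduct, dotProduct, Finset.sum_div,
        Complex.re_sum]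
      refine Finset.sum_congr rfl fun l _ => ?_
      simp only [Matrix.map_apply, RingHom.mapMatrix_apply, eq_intCast]
      rw [mul_div_assoc, ← Complex.ofReal_intCast, Complex.re_ofReal_mul]
    rw [h1]
    have hy1 : 0 < ‖y‖ := norm_pos_iff.2 hy0
    calc ‖(Matrix.mulVec (B ^ j) (u p) k / (2 * y)).re‖
        ≤ ‖Matrix.mulVec (B ^ j) (u p) k / (2 * y)‖ := Complex.abs_re_le_norm _
      _ = ‖Matrix.mulVec (B ^ j) (u p) k‖ / (2 * ‖y‖) := by simp
      _ ≤ C₀ * r ^ j / ‖y‖ := by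
        gcongr
        · exact (norm_le_pi_norm _ k).trans (hCp j)
        · linarith
      _ ≤ C₀ * B₀ ^ m * (∑ i, |(n i : ℝ)|) ^ m * r ^ j := by
        rw [div_le_iff₀ hy1]
        calc C₀ * r ^ j = C₀ * r ^ j * 1 := by ring
          _ ≤ C₀ * r ^ j * (‖y‖ * ((∑ i, |(n i : ℝ)|) * B₀) ^ m) := by gcongr
          _ = _ := by rw [mul_pow]; ring

lemma exists_contracted_vector {d : ℕ} (hd : 0 < d) (S : Matrix (Fin d) (Fin d) ℤ)
    (hdet : S.det = 1) (hEig : NoRootOfUnityEigenvalue S) :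
    ∃ (C : ℝ) (m : ℕ) (ρ : ℝ), 0 ≤ C ∧ 0 < ρ ∧ ρ < 1 ∧ ∀ n : Fin d → ℤ, n ≠ 0 →
      ∃ w : Fin d → ℝ, ∑ i, (n i : ℝ) * w i = 1 / 2 ∧
        ∀ j : ℕ, ‖Matrix.mulVec ((S⁻¹ ^ j).map (Int.cast : ℤ → ℝ)) w‖
          ≤ C * (∑ i, |(n i : ℝ)|) ^ m * ρ ^ j := by
  let χ : Polynomial ℚ := ((Int.castRingHom ℚ).mapMatrix S).charpoly
  have : NumberField χ.SplittingField := ⟨⟩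
  refine exists_contracted_vector_of_splits χ.SplittingField hd S hdet hEig ?_
  have h := Polynomial.SplittingField.splits χ
  rw [← Matrix.charpoly_map] at h
  have hmap : (Int.castRingHom χ.SplittingField).mapMatrix S
      = ((Int.castRingHom ℚ).mapMatrix S).map (algebraMap ℚ χ.SplittingField) := by
    ext i j
    simp
  rw [hmap]
  exact h

lemma NoRootOfUnityEigenvalue.inv {d : ℕ} {S : Matrix (Fin d) (Fin d) ℤ} (hdet : S.det = 1)
    (hEig : NoRootOfUnityEigenvalue S) : NoRootOfUnityEigenvalue S⁻¹ := by
  intro z hz n hn hzn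
  have hS : IsUnit S.det := by rw [hdet]; exact isUnit_one
  let U : (Matrix (Fin d) (Fin d) ℂ)ˣ :=
    ⟨(Int.castRingHom ℂ).mapMatrix S, (Int.castRingHom ℂ).mapMatrix S⁻¹,
      by rw [← map_mul, Matrix.mul_nonsing_inv S hS, map_one],
      by rw [← map_mul, Matrix.nonsing_inv_mul S hS, map_one]⟩
  have hz0 : z ≠ 0 := by
    rintro rfl
    simp [hn] at hzn
  have h1 : z ∈ spectrum ℂ ((U⁻¹ : (Matrix (Fin d) (Fin d) ℂ)ˣ) : Matrix (Fin d) (Fin d) ℂ) :=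
    Matrix.mem_spectrum_iff_isRoot_charpoly.2 hz
  have h2 := (spectrum.inv_mem_iff (r := Units.mk0 z hz0) (a := U⁻¹)).1 h1
  rw [inv_inv] at h2
  refine hEig z⁻¹ ?_ n hn (by rw [inv_pow, hzn, inv_one])
  have h3 := Matrix.mem_spectrum_iff_isRoot_charpoly.1 h2
  rw [Units.val_inv_eq_inv_val, Units.val_mk0] at h3
  exact h3

/-- The quotient map from `ℝ^d` onto the torus. -/
def torusProj {d : ℕ} (v : Fin d → ℝ) : Torus d := fun i => (v i : AddCircle (1 : ℝ))

lemma norm_coe_addCircle_le (x : ℝ) : ‖(x : AddCircle (1 : ℝ))‖ ≤ |x| := by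
  rw [UnitAddCircle.norm_eq]
  simpa using round_le x 0

lemma norm_torusProj_le {d : ℕ} (v : Fin d → ℝ) : ‖torusProj v‖ ≤ ‖v‖ :=
  (pi_norm_le_iff_of_nonneg (norm_nonneg _)).2 fun i =>
    (norm_coe_addCircle_le _).trans (norm_le_pi_norm v i)

lemma torusAut_add {d : ℕ} (A : Matrix (Fin d) (Fin d) ℤ) (x y : Torus d) :
    torusAut A (x + y) = torusAut A x + torusAut A y := by
  funext i
  simp [torusAut, Finset.sum_add_distrib]

lemma torusAut_sub {d : ℕ} (A : Matrix (Fin d) (Fin d) ℤ) (x y : Torus d) :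
    torusAut A (x - y) = torusAut A x - torusAut A y := by
  funext i
  simp [torusAut, zsmul_sub, Finset.sum_sub_distrib]

lemma torusAut_one {d : ℕ} (x : Torus d) : torusAut 1 x = x := by
  funext i
  simp [torusAut, Matrix.one_apply, ite_smul]

lemma torusAut_mul {d : ℕ} (A B : Matrix (Fin d) (Fin d) ℤ) (x : Torus d) :
    torusAut (A * B) x = torusAut A (torusAut B x) := by
  funext i
  simp only [torusAut, Matrix.mul_apply, Finset.sum_smul, Finset.smul_sum, mul_smul]
  exact Finset.sum_comm

lemma torusAut_torusProj {d : ℕ} (A : Matrix (Fin d) (Fin d) ℤ) (v : Fin d → ℝ) :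
    torusAut A (torusProj v) = torusProj (Matrix.mulVec (A.map (Int.cast : ℤ → ℝ)) v) := by
  funext i
  have h : ∀ s : Finset (Fin d), ((∑ j ∈ s, (A i j : ℝ) * v j : ℝ) : AddCircle (1 : ℝ))
      = ∑ j ∈ s, A i j • (v j : AddCircle (1 : ℝ)) := fun s => by
    rw [← QuotientAddGroup.coe_mk', map_sum]
    refine Finset.sum_congr rfl fun j _ => ?_
    rw [← zsmul_eq_mul, map_zsmul]
  exact (h Finset.univ).symm

lemma torusAut_iterate {d : ℕ} (A : Matrix (Fin d) (Fin d) ℤ) (n : ℕ) :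
    (torusAut A)^[n] = torusAut (A ^ n) := by
  induction n with
  | zero => funext x; simp [torusAut_one]
  | succ n ih => funext x; rw [Function.iterate_succ_apply, ih, pow_succ, torusAut_mul]

lemma Titer_torusAut {d : ℕ} (S : Matrix (Fin d) (Fin d) ℤ) (k : ℤ) :
    Titer (torusAut S) (torusAut S⁻¹) k = torusAut (S ^ k) := by
  cases k with
  | ofNat n => simp [Titer, torusAut_iterate]
  | negSucc n => rw [Titer, torusAut_iterate, zpow_negSucc, Matrix.inv_pow']

lemma continuous_torusAut {d : ℕ} (A : Matrix (Fin d) (Fin d) ℤ) : Continuous (torusAut A) := by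
  unfold torusAut
  fun_prop

lemma torusAut_zpow_add {d : ℕ} {S : Matrix (Fin d) (Fin d) ℤ} (hS : IsUnit S.det) (j k : ℤ)
    (x : Torus d) : torusAut (S ^ (j + k)) x = torusAut (S ^ j) (torusAut (S ^ k) x) := by
  rw [Matrix.zpow_add hS, torusAut_mul]

lemma measurePreserving_torusAut {d : ℕ} {A : Matrix (Fin d) (Fin d) ℤ} (hA : IsUnit A.det) :
    MeasurePreserving (torusAut A) (volume : Measure (Torus d)) volume := by
  let T : Torus d →+ Torus d :=
    { toFun := torusAut A
      map_zero' := by funext i; simp [torusAut]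
      map_add' := torusAut_add A }
  refine AddMonoidHom.measurePreserving (f := T) (continuous_torusAut A) (fun x => ?_) rfl
  refine ⟨torusAut A⁻¹ x, ?_⟩
  change torusAut A (torusAut A⁻¹ x) = x
  rw [← torusAut_mul, Matrix.mul_nonsing_inv A hA, torusAut_one]

lemma exists_norm_torusAut_le {d : ℕ} (A : Matrix (Fin d) (Fin d) ℤ) :
    ∃ Λ : ℝ, 1 ≤ Λ ∧ ∀ x : Torus d, ‖torusAut A x‖ ≤ Λ * ‖x‖ := by
  refine ⟨1 + ∑ i, ∑ j, |(A i j : ℝ)|, ?_, fun x => ?_⟩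
  · have : 0 ≤ ∑ i, ∑ j, |(A i j : ℝ)| :=
      Finset.sum_nonneg fun _ _ => Finset.sum_nonneg fun _ _ => abs_nonneg _
    linarith
  · have h0 : 0 ≤ ∑ i, ∑ j, |(A i j : ℝ)| :=
      Finset.sum_nonneg fun _ _ => Finset.sum_nonneg fun _ _ => abs_nonneg _
    refine (pi_norm_le_iff_of_nonneg (by positivity)).2 fun i => ?_
    calc ‖torusAut A x i‖ ≤ ∑ j, |(A i j : ℝ)| * ‖x‖ := by
          refine (norm_sum_le _ _).trans (Finset.sum_le_sum fun j _ => ?_)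
          refine (norm_zsmul_le (A i j) (x j)).trans ?_
          rw [Int.norm_eq_abs]
          gcongr
          exact norm_le_pi_norm x j
      _ = (∑ j, |(A i j : ℝ)|) * ‖x‖ := by rw [Finset.sum_mul]
      _ ≤ (1 + ∑ i, ∑ j, |(A i j : ℝ)|) * ‖x‖ := by
          gcongr
          have : ∑ j, |(A i j : ℝ)| ≤ ∑ i, ∑ j, |(A i j : ℝ)| :=
            Finset.single_le_sum (f := fun i => ∑ j, |(A i j : ℝ)|)
              (fun _ _ => Finset.sum_nonneg fun _ _ => abs_nonneg _) (Finset.mem_univ i)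
          linarith

lemma exists_norm_torusAut_pow_le {d : ℕ} (A : Matrix (Fin d) (Fin d) ℤ) :
    ∃ Λ : ℝ, 1 ≤ Λ ∧ ∀ (n : ℕ) (x : Torus d), ‖torusAut (A ^ n) x‖ ≤ Λ ^ n * ‖x‖ := by
  obtain ⟨Λ, hΛ, h⟩ := exists_norm_torusAut_le A
  refine ⟨Λ, hΛ, fun n => ?_⟩
  induction n with
  | zero => intro x; simp [torusAut_one]
  | succ n ih =>
    intro x
    rw [pow_succ, torusAut_mul, pow_succ, mul_assoc]
    exact (ih _).trans (by gcongr; exact h x)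

lemma mFourier_add_apply {d : ℕ} (n : Fin d → ℤ) (x y : Torus d) :
    UnitAddTorus.mFourier n (x + y) = UnitAddTorus.mFourier n x * UnitAddTorus.mFourier n y := by
  simp [UnitAddTorus.mFourier, fourier_apply, ← Finset.prod_mul_distrib, AddCircle.toCircle_add]

lemma mFourier_torusProj {d : ℕ} (n : Fin d → ℤ) (w : Fin d → ℝ)
    (hw : ∑ i, (n i : ℝ) * w i = 1 / 2) : UnitAddTorus.mFourier n (torusProj w) = -1 := by
  have h1 : UnitAddTorus.mFourier n (torusProj w)
      = Complex.exp (∑ i, 2 * Real.pi * Complex.I * ((n i : ℝ) * w i : ℝ)) := by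
    rw [Complex.exp_sum]
    change ∏ i, fourier (n i) (torusProj w i) = _
    refine Finset.prod_congr rfl fun i _ => ?_
    rw [torusProj, fourier_coe_apply]
    congr 1
    push_cast
    ring
  rw [h1, ← Finset.mul_sum, ← Complex.ofReal_sum, hw, ← Complex.exp_pi_mul_I]
  congr 1
  push_cast
  ring

lemma norm_mFourier_apply {d : ℕ} (n : Fin d → ℤ) (x : Torus d) :
    ‖UnitAddTorus.mFourier n x‖ = 1 := by
  change ‖∏ i, fourier (n i) (x i)‖ = 1
  rw [norm_prod]
  exact Finset.prod_eq_one fun i _ => by rw [fourier_apply, Circle.norm_coe]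

instance isProbabilityMeasure_addCircle :
    IsProbabilityMeasure (volume : Measure (AddCircle (1 : ℝ))) := ⟨UnitAddCircle.measure_univ⟩

instance isProbabilityMeasure_torus (d : ℕ) :
    IsProbabilityMeasure (volume : Measure (Torus d)) :=
  inferInstanceAs (IsProbabilityMeasure (Measure.pi fun _ : Fin d =>
    (volume : Measure (AddCircle (1 : ℝ)))))

/-- The Fejér kernel of order `D` on the circle. -/
def fejer (D : ℕ) (y : AddCircle (1 : ℝ)) : ℝ :=
  ‖∑ k : Fin D, fourier (k : ℤ) y‖ ^ 2 / D

lemma fejer_nonneg (D : ℕ) (y : AddCircle (1 : ℝ)) : 0 ≤ fejer D y := by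
  unfold fejer
  positivity

lemma continuous_fejer (D : ℕ) : Continuous (fejer D) := by
  unfold fejer
  fun_prop

lemma fejer_eq_sum (D : ℕ) (y : AddCircle (1 : ℝ)) :
    (fejer D y : ℂ) = (D : ℂ)⁻¹ * ∑ q : Fin D × Fin D, fourier ((q.1 : ℤ) - (q.2 : ℤ)) y := by
  rw [fejer]
  push_cast
  rw [← Complex.mul_conj', map_sum, Finset.sum_mul_sum, Fintype.sum_prod_type, div_eq_inv_mul]
  congr 1
  refine Finset.sum_congr rfl fun k _ => Finset.sum_congr rfl fun l _ => ?_
  rw [← fourier_neg, ← fourier_add, sub_eq_add_neg]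

lemma integral_fourier_eq_ite (n : ℤ) :
    ∫ y : AddCircle (1 : ℝ), fourier n y = if n = 0 then 1 else 0 := by
  split_ifs with h
  · subst h
    simp
  · have h1 := integral_add_right_eq_self (μ := (volume : Measure (AddCircle (1 : ℝ))))
      (fun y => fourier n y) ((1 / 2 / n : ℝ) : AddCircle (1 : ℝ))
    simp only [fourier_add_half_inv_index h one_pos, integral_neg] at h1
    exact self_eq_neg.1 h1.symm

lemma integrable_of_continuous_addCircle {E : Type*} [NormedAddCommGroup E]
    {g : AddCircle (1 : ℝ) → E} (hg : Continuous g) : Integrable g :=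
  hg.integrable_of_hasCompactSupport (HasCompactSupport.of_compactSpace g)

lemma integral_fejer_mul_fourier (D : ℕ) (m : ℤ) :
    ∫ y, (fejer D y : ℂ) * fourier m y
      = (D : ℂ)⁻¹ * ∑ q : Fin D × Fin D, if (q.1 : ℤ) - (q.2 : ℤ) + m = 0 then 1 else 0 := by
  simp_rw [fejer_eq_sum, mul_assoc, Finset.sum_mul, ← fourier_add]
  rw [integral_const_mul, integral_finsetSum _ fun q _ =>
    integrable_of_continuous_addCircle (map_continuous _)]
  simp_rw [integral_fourier_eq_ite]

lemma integral_fejer {D : ℕ} (hD : 0 < D) : ∫ y, fejer D y = 1 := by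
  have h := integral_fejer_mul_fourier D 0
  simp only [fourier_zero, mul_one, add_zero, sub_eq_zero, Fintype.sum_prod_type, Nat.cast_inj,
    Fin.val_inj, Finset.sum_ite_eq, Finset.mem_univ, if_true, Finset.sum_const, Finset.card_univ,
    Fintype.card_fin, nsmul_eq_mul] at h
  rw [integral_complex_ofReal, inv_mul_cancel₀ (by exact_mod_cast hD.ne')] at h
  exact_mod_cast h

lemma sum_fin_prod_succ_eq (D : ℕ) :
    (∑ q : Fin (D + 1) × Fin (D + 1), if (q.1 : ℤ) - (q.2 : ℤ) + 1 = 0 then (1 : ℂ) else 0)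
      = D := by
  have h : ∀ k l : Fin (D + 1), ((k : ℤ) - (l : ℤ) + 1 = 0) ↔ ((l : ℕ) = (k : ℕ) + 1) :=
    fun k l => by omega
  simp only [Fintype.sum_prod_type, h]
  rw [Fin.sum_univ_castSucc]
  have hlast : (∑ l : Fin (D + 1), if (l : ℕ) = ((Fin.last D : Fin (D + 1)) : ℕ) + 1 then (1 : ℂ)
      else 0) = 0 := by
    refine Finset.sum_eq_zero fun l _ => if_neg ?_
    have := l.isLt
    simp
    omega
  have hcast : ∀ k : Fin D, (∑ l : Fin (D + 1), if (l : ℕ) = ((k.castSucc : Fin (D + 1)) : ℕ) + 1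
      then (1 : ℂ) else 0) = 1 := by
    intro k
    rw [Finset.sum_eq_single k.succ]
    · simp
    · intro l _ hl
      refine if_neg fun h => hl (Fin.ext ?_)
      simpa using h
    · simp
  rw [hlast, Finset.sum_congr rfl fun k _ => hcast k]
  simp

lemma sq_norm_le_one_sub_re_fourier (y : AddCircle (1 : ℝ)) :
    ‖y‖ ^ 2 ≤ 1 - (fourier 1 y).re := by
  induction y using QuotientAddGroup.induction_on with
  | H x =>
    have h1 : (fourier 1 (x : AddCircle (1 : ℝ))).re = Real.cos (2 * Real.pi * (x - round x)) := by
      rw [fourier_coe_apply]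
      have : (2 * Real.pi * Complex.I * (1 : ℤ) * x / (1 : ℝ) : ℂ)
          = ((2 * Real.pi * x : ℝ) : ℂ) * Complex.I := by
        push_cast
        ring
      rw [this, Complex.exp_ofReal_mul_I_re, mul_sub, mul_comm (2 * Real.pi) (round x : ℝ),
        Real.cos_sub_int_mul_two_pi]
    have h2 : ‖(x : AddCircle (1 : ℝ))‖ = |x - round x| := UnitAddCircle.norm_eq
    change ‖(x : AddCircle (1 : ℝ))‖ ^ 2 ≤ 1 - (fourier 1 (x : AddCircle (1 : ℝ))).re
    rw [h1, h2, sq_abs]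
    have h3 : |2 * Real.pi * (x - round x)| ≤ Real.pi := by
      rw [abs_mul, abs_of_pos (by positivity)]
      nlinarith [abs_sub_round x, Real.pi_pos]
    have h4 := Real.cos_le_one_sub_mul_cos_sq h3
    have h5 : 2 / Real.pi ^ 2 * (2 * Real.pi * (x - round x)) ^ 2 = 8 * (x - round x) ^ 2 := by
      field_simp
      ring
    nlinarith [sq_nonneg (x - round x)]

lemma integral_fejer_mul_sq_norm_le {D : ℕ} (hD : 0 < D) :
    ∫ y, fejer D y * ‖y‖ ^ 2 ≤ (D : ℝ)⁻¹ := by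
  have h1 : ∫ y, fejer D y * (fourier 1 y).re = 1 - (D : ℝ)⁻¹ := by
    obtain ⟨E, rfl⟩ := Nat.exists_eq_succ_of_ne_zero hD.ne'
    have h := congrArg Complex.re (integral_fejer_mul_fourier (E + 1) 1)
    rw [sum_fin_prod_succ_eq, ← RCLike.re_eq_complex_re, ← integral_re
      (integrable_of_continuous_addCircle (by have := continuous_fejer (E + 1); fun_prop))] at h
    simp only [RCLike.re_eq_complex_re, Complex.re_ofReal_mul] at h
    rw [Nat.succ_eq_add_one, h]
    have : (((E + 1 : ℕ) : ℂ)⁻¹ * (E : ℂ)).re = ((E + 1 : ℕ) : ℝ)⁻¹ * E := by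
      rw [← Complex.ofReal_natCast, ← Complex.ofReal_natCast, ← Complex.ofReal_inv,
        ← Complex.ofReal_mul, Complex.ofReal_re]
    rw [this]
    push_cast
    field_simp
    ring
  have hc := continuous_fejer D
  calc ∫ y, fejer D y * ‖y‖ ^ 2 ≤ ∫ y, (fejer D y - fejer D y * (fourier 1 y).re) := by
        refine integral_mono (integrable_of_continuous_addCircle (by fun_prop))
          (integrable_of_continuous_addCircle (by fun_prop)) fun y => ?_
        have := mul_le_mul_of_nonneg_left (sq_norm_le_one_sub_re_fourier y) (fejer_nonneg D y)
        simp only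
        linarith
    _ = (D : ℝ)⁻¹ := by
        rw [integral_sub (integrable_of_continuous_addCircle (by fun_prop))
          (integrable_of_continuous_addCircle (by fun_prop)), integral_fejer hD, h1]
        ring

/-- The Fejér kernel of order `D` on the torus. -/
def torusFejer {d : ℕ} (D : ℕ) (y : Torus d) : ℝ := ∏ i, fejer D (y i)

/-- The difference of two multi-indices in the box `[0, D)^d`. -/
def boxDiff {d D : ℕ} (q : Fin d → Fin D × Fin D) : Fin d → ℤ :=
  fun i => ((q i).1 : ℤ) - ((q i).2 : ℤ)

lemma torusFejer_nonneg {d : ℕ} (D : ℕ) (y : Torus d) : 0 ≤ torusFejer D y :=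
  Finset.prod_nonneg fun _ _ => fejer_nonneg _ _

lemma continuous_torusFejer {d : ℕ} (D : ℕ) : Continuous (torusFejer D : Torus d → ℝ) :=
  continuous_finsetProd _ fun i _ => (continuous_fejer D).comp (continuous_apply i)

lemma torusFejer_eq_sum {d : ℕ} (D : ℕ) (y : Torus d) :
    (torusFejer D y : ℂ) = ((D : ℂ)⁻¹) ^ d *
      ∑ q : Fin d → Fin D × Fin D, UnitAddTorus.mFourier (boxDiff q) y := by
  rw [torusFejer, Complex.ofReal_prod]
  simp_rw [fejer_eq_sum]
  rw [Finset.prod_mul_distrib, Finset.prod_const, Finset.card_univ, Fintype.card_fin,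
    Finset.prod_univ_sum, Fintype.piFinset_univ]
  rfl

lemma integrable_of_continuous_torus {d : ℕ} {E : Type*} [NormedAddCommGroup E]
    {g : Torus d → E} (hg : Continuous g) : Integrable g :=
  hg.integrable_of_hasCompactSupport (HasCompactSupport.of_compactSpace g)

lemma integral_torusFejer {d D : ℕ} (hD : 0 < D) : ∫ y : Torus d, torusFejer D y = 1 := by
  unfold torusFejer
  rw [integral_fintype_prod_volume_eq_prod (fun (_ : Fin d) y => fejer D y)]
  simp [integral_fejer hD]

lemma integral_torusFejer_mul_sq_norm_le {d D : ℕ} (hD : 0 < D) (i : Fin d) :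
    ∫ y : Torus d, torusFejer D y * ‖y i‖ ^ 2 ≤ (D : ℝ)⁻¹ := by
  have h : ∀ y : Torus d, torusFejer D y * ‖y i‖ ^ 2
      = ∏ j, (fun (j : Fin d) (z : AddCircle (1 : ℝ)) =>
          if j = i then fejer D z * ‖z‖ ^ 2 else fejer D z) j (y j) := by
    intro y
    have h1 : ∀ j, (if j = i then fejer D (y j) * ‖y j‖ ^ 2 else fejer D (y j))
        = fejer D (y j) * if j = i then ‖y j‖ ^ 2 else 1 := fun j => by
      split_ifs <;> simp
    simp only [h1, Finset.prod_mul_distrib, Finset.prod_ite_eq', Finset.mem_univ, if_true]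
    rfl
  simp_rw [h]
  rw [integral_fintype_prod_volume_eq_prod (fun (j : Fin d) (z : AddCircle (1 : ℝ)) =>
    if j = i then fejer D z * ‖z‖ ^ 2 else fejer D z)]
  rw [← Finset.mul_prod_erase _ _ (Finset.mem_univ i), Finset.prod_eq_one, mul_one]
  · simpa using integral_fejer_mul_sq_norm_le hD
  · intro j hj
    simpa [(Finset.mem_erase.1 hj).1] using integral_fejer hD

lemma sq_norm_torus_le_sum {d : ℕ} (y : Torus d) : ‖y‖ ^ 2 ≤ ∑ i, ‖y i‖ ^ 2 := by
  have h0 : 0 ≤ ∑ i, ‖y i‖ ^ 2 := Finset.sum_nonneg fun _ _ => by positivity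
  rw [← Real.le_sqrt (norm_nonneg _) h0]
  refine (pi_norm_le_iff_of_nonneg (Real.sqrt_nonneg _)).2 fun i => ?_
  rw [Real.le_sqrt (norm_nonneg _) h0]
  exact Finset.single_le_sum (f := fun i => ‖y i‖ ^ 2) (fun _ _ => by positivity)
    (Finset.mem_univ i)

lemma rpow_le_add_mul_sq {η D t : ℝ} (hη : 0 < η) (hη1 : η ≤ 1) (hD : 0 < D) (ht : 0 ≤ t) :
    t ^ η ≤ D ^ (-(η / 2)) * (1 + D * t ^ 2) := by
  have hs : 0 < Real.sqrt D := Real.sqrt_pos.2 hD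
  have hrw : D ^ (-(η / 2)) = ((Real.sqrt D)⁻¹) ^ η := by
    rw [Real.sqrt_eq_rpow, ← Real.rpow_neg hD.le, ← Real.rpow_mul hD.le]
    congr 1
    ring
  have hu : t = (Real.sqrt D)⁻¹ * (Real.sqrt D * t) := by field_simp
  have hu2 : D * t ^ 2 = (Real.sqrt D * t) ^ 2 := by rw [mul_pow, Real.sq_sqrt hD.le]
  rw [hrw, hu2]
  set u := Real.sqrt D * t with hudef
  have hu0 : 0 ≤ u := by positivity
  rw [hu, Real.mul_rpow (by positivity) hu0]
  gcongr
  rcases le_total u 1 with h | h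
  · have := Real.rpow_le_one hu0 h hη.le
    nlinarith [sq_nonneg u]
  · have := Real.rpow_le_rpow_of_exponent_le h (by linarith : η ≤ 2)
    rw [Real.rpow_two] at this
    linarith

lemma integral_torusFejer_mul_rpow_norm_le {d D : ℕ} (hD : 0 < D) {η : ℝ} (hη : 0 < η)
    (hη1 : η ≤ 1) :
    ∫ y : Torus d, torusFejer D y * ‖y‖ ^ η ≤ (1 + d) * (D : ℝ) ^ (-(η / 2)) := by
  have hD0 : (0 : ℝ) < D := by exact_mod_cast hD
  have hc := continuous_torusFejer (d := d) D
  have hInt : ∀ i, Integrable fun y : Torus d => torusFejer D y * ‖y i‖ ^ 2 := fun i =>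
    integrable_of_continuous_torus (by fun_prop)
  calc ∫ y : Torus d, torusFejer D y * ‖y‖ ^ η
      ≤ ∫ y : Torus d, (D : ℝ) ^ (-(η / 2)) *
          (torusFejer D y + D * ∑ i, torusFejer D y * ‖y i‖ ^ 2) := by
        refine integral_mono (integrable_of_continuous_torus ?_)
          (integrable_of_continuous_torus (by fun_prop)) fun y => ?_
        · exact hc.mul (continuous_norm.rpow_const fun _ => Or.inr hη.le)
        · have h1 := rpow_le_add_mul_sq hη hη1 hD0 (norm_nonneg y)
          have h2 := sq_norm_torus_le_sum y
          have h3 : ‖y‖ ^ η ≤ (D : ℝ) ^ (-(η / 2)) * (1 + D * ∑ i, ‖y i‖ ^ 2) :=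
            h1.trans (by gcongr)
          have h4 := mul_le_mul_of_nonneg_left h3 (torusFejer_nonneg D y)
          refine h4.trans (le_of_eq ?_)
          simp only [← Finset.mul_sum]
          ring
    _ = (D : ℝ) ^ (-(η / 2)) *
          (1 + D * ∑ i, ∫ y : Torus d, torusFejer D y * ‖y i‖ ^ 2) := by
        rw [integral_const_mul, integral_add (integrable_of_continuous_torus hc)
          (integrable_of_continuous_torus (by fun_prop)), integral_torusFejer hD,
          integral_const_mul, integral_finsetSum _ fun i _ => hInt i]
    _ ≤ (D : ℝ) ^ (-(η / 2)) * (1 + D * ∑ _i : Fin d, (D : ℝ)⁻¹) := by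
        gcongr with i
        exact integral_torusFejer_mul_sq_norm_le hD i
    _ = (1 + d) * (D : ℝ) ^ (-(η / 2)) := by
        simp
        field_simp

/-- Convolution of a function on the torus with the Fejér kernel. -/
def fejerConv {d : ℕ} (D : ℕ) (G : Torus d → ℂ) (x : Torus d) : ℂ :=
  ∫ y, (torusFejer D y : ℂ) * G (x - y)

lemma integrable_of_bounded {d : ℕ} {G : Torus d → ℂ} (hG : Measurable G) {B : ℝ}
    (hB : ∀ x, ‖G x‖ ≤ B) : Integrable G :=
  Integrable.of_bound hG.aestronglyMeasurable B (Eventually.of_forall hB)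

lemma norm_sub_fejerConv_le {d D : ℕ} (hD : 0 < D) {η H B : ℝ} (hη : 0 < η) (hη1 : η ≤ 1)
    (hH : 0 ≤ H) {G : Torus d → ℂ} (hG : Measurable G) (hB : ∀ x, ‖G x‖ ≤ B)
    (hHol : ∀ x y, ‖G x - G y‖ ≤ H * ‖x - y‖ ^ η) (x : Torus d) :
    ‖G x - fejerConv D G x‖ ≤ H * ((1 + d) * (D : ℝ) ^ (-(η / 2))) := by
  have hc := continuous_torusFejer (d := d) D
  have hK : Integrable fun y : Torus d => (torusFejer D y : ℂ) :=
    integrable_of_continuous_torus (by fun_prop)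
  have hi1 : Integrable fun y : Torus d => (torusFejer D y : ℂ) * G x := hK.mul_const _
  have hi2 : Integrable fun y : Torus d => (torusFejer D y : ℂ) * G (x - y) :=
    hK.mul_bdd (c := B) (hG.comp (measurable_const.sub measurable_id)).aestronglyMeasurable
      (Eventually.of_forall fun y => hB _)
  have h1 : G x = ∫ y : Torus d, (torusFejer D y : ℂ) * G x := by
    rw [integral_mul_const, integral_complex_ofReal, integral_torusFejer hD]
    simp
  rw [fejerConv]
  nth_rewrite 1 [h1]
  rw [← integral_sub hi1 hi2]
  calc ‖∫ y : Torus d, ((torusFejer D y : ℂ) * G x - (torusFejer D y : ℂ) * G (x - y))‖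
      ≤ ∫ y : Torus d, H * (torusFejer D y * ‖y‖ ^ η) := by
        refine norm_integral_le_of_norm_le ((integrable_of_continuous_torus
          (hc.mul (continuous_norm.rpow_const fun _ => Or.inr hη.le))).const_mul H)
          (Eventually.of_forall fun y => ?_)
        rw [← mul_sub, norm_mul, Complex.norm_real, Real.norm_of_nonneg (torusFejer_nonneg D y)]
        have := hHol x (x - y)
        rw [sub_sub_cancel] at this
        calc torusFejer D y * ‖G x - G (x - y)‖ ≤ torusFejer D y * (H * ‖y‖ ^ η) :=
              mul_le_mul_of_nonneg_left this (torusFejer_nonneg D y)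
          _ = _ := by ring
    _ ≤ H * ((1 + d) * (D : ℝ) ^ (-(η / 2))) := by
        rw [integral_const_mul]
        gcongr
        exact integral_torusFejer_mul_rpow_norm_le hD hη hη1

instance isNegInvariant_torus {d : ℕ} : (volume : Measure (Torus d)).IsNegInvariant := by
  have h : torusAut (-1 : Matrix (Fin d) (Fin d) ℤ) = Neg.neg := by
    funext x
    funext i
    have h1 := congrFun (torusAut_one x) i
    simp only [torusAut, Matrix.neg_apply, neg_smul, Finset.sum_neg_distrib, Pi.neg_apply] at h1 ⊢
    rw [h1]
  refine ⟨?_⟩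
  rw [Measure.neg, ← h]
  refine (measurePreserving_torusAut ?_).map_eq
  rw [Matrix.det_neg, Matrix.det_one, mul_one]
  exact isUnit_one.neg.pow _

lemma fejerConv_eq_sum {d : ℕ} (D : ℕ) {B : ℝ} {G : Torus d → ℂ} (hG : Measurable G)
    (hB : ∀ x, ‖G x‖ ≤ B) (x : Torus d) :
    fejerConv D G x = ((D : ℂ)⁻¹) ^ d * ∑ q : Fin d → Fin D × Fin D,
      UnitAddTorus.mFourier (boxDiff q) x *
        ∫ y, UnitAddTorus.mFourier (boxDiff q) (-y) * G y := by
  have hInt : ∀ n : Fin d → ℤ, Integrable fun y : Torus d =>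
      UnitAddTorus.mFourier n (-y) * G y := fun n =>
    (integrable_of_bounded hG hB).bdd_mul (c := 1)
      (by fun_prop : Continuous _).aestronglyMeasurable
      (Eventually.of_forall fun y => (norm_mFourier_apply n _).le)
  rw [fejerConv, ← integral_sub_left_eq_self (fun y => (torusFejer D y : ℂ) * G (x - y)) volume x]
  simp_rw [sub_sub_cancel, torusFejer_eq_sum, sub_eq_add_neg, mFourier_add_apply, mul_assoc,
    Finset.sum_mul, mul_assoc]
  rw [integral_const_mul, integral_finsetSum _ fun q _ => (hInt _).const_mul _]
  simp_rw [integral_const_mul]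

lemma card_boxDiff_eq_zero (d D : ℕ) :
    (Finset.univ.filter fun q : Fin d → Fin D × Fin D => boxDiff q = 0).card = D ^ d := by
  have h : (Finset.univ.filter fun q : Fin d → Fin D × Fin D => boxDiff q = 0)
      = Finset.univ.image fun (r : Fin d → Fin D) i => (r i, r i) := by
    ext q
    simp only [Finset.mem_filter, Finset.mem_univ, true_and, Finset.mem_image]
    constructor
    · intro hq
      refine ⟨fun i => (q i).1, funext fun i => Prod.ext rfl (Fin.ext ?_)⟩
      have := congrFun hq i
      simp only [boxDiff, Pi.zero_apply] at this
      change ((q i).1 : ℕ) = (q i).2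
      omega
    · rintro ⟨r, rfl⟩
      funext i
      simp [boxDiff]
  rw [h, Finset.card_image_of_injective, Finset.card_univ, Fintype.card_fun]
  · simp
  · intro r r' hr
    funext i
    exact congrArg Prod.fst (congrFun hr i)

lemma abs_boxDiff_le {d D : ℕ} (q : Fin d → Fin D × Fin D) (i : Fin d) : |boxDiff q i| ≤ D := by
  have h1 := (q i).1.2
  have h2 := (q i).2.2
  simp only [boxDiff]
  rw [abs_le]
  omega

lemma norm_integral_torus_le {d : ℕ} {g : Torus d → ℂ} {B : ℝ} (hB : ∀ x, ‖g x‖ ≤ B) :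
    ‖∫ x, g x‖ ≤ B := by
  simpa using norm_integral_le_of_norm_le_const (μ := (volume : Measure (Torus d)))
    (Eventually.of_forall hB)

lemma norm_integral_mul_comp_sub_le {d D : ℕ} (hD : 0 < D) {η H B E : ℝ} (hη : 0 < η)
    (hη1 : η ≤ 1) (hH : 0 ≤ H) (hE0 : 0 ≤ E) {T : Torus d → Torus d} (hT : Measurable T)
    {F G : Torus d → ℂ} (hF : Measurable F) (hFB : ∀ x, ‖F x‖ ≤ B) (hG : Measurable G)
    (hGB : ∀ x, ‖G x‖ ≤ B) (hHol : ∀ x y, ‖G x - G y‖ ≤ H * ‖x - y‖ ^ η)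
    (hE : ∀ n : Fin d → ℤ, n ≠ 0 → (∀ i, |n i| ≤ D) →
      ‖∫ x, F x * UnitAddTorus.mFourier n (T x)‖ ≤ E) :
    ‖(∫ x, F x * G (T x)) - (∫ x, F x) * ∫ x, G x‖
      ≤ B * (H * ((1 + d) * (D : ℝ) ^ (-(η / 2)))) + (D : ℝ) ^ d * (E * B) := by
  have hD0 : (0 : ℝ) < D := by exact_mod_cast hD
  have hB0 : 0 ≤ B := (norm_nonneg _).trans (hFB 0)
  have hFi := integrable_of_bounded hF hFB
  set a : (Fin d → ℤ) → ℂ := fun n => (∫ x, F x * UnitAddTorus.mFourier n (T x)) *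
    ∫ y, UnitAddTorus.mFourier n (-y) * G y with ha
  have hFe : ∀ n : Fin d → ℤ, Integrable fun x => F x * UnitAddTorus.mFourier n (T x) := fun n =>
    hFi.mul_bdd (c := 1) (((UnitAddTorus.mFourier n).continuous.measurable).comp
      hT).aestronglyMeasurable (Eventually.of_forall fun x => (norm_mFourier_apply n _).le)
  have hconv : (fun x => F x * fejerConv D G (T x)) = fun x => ((D : ℂ)⁻¹) ^ d *
      ∑ q : Fin d → Fin D × Fin D, (F x * UnitAddTorus.mFourier (boxDiff q) (T x)) *
        ∫ y, UnitAddTorus.mFourier (boxDiff q) (-y) * G y := by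
    funext x
    rw [fejerConv_eq_sum D hG hGB, mul_left_comm, Finset.mul_sum]
    simp only [mul_assoc]
  have hconvi : Integrable fun x => F x * fejerConv D G (T x) := by
    rw [hconv]
    exact (integrable_finsetSum _ fun q _ => (hFe _).mul_const _).const_mul _
  have hGi : Integrable fun x => F x * G (T x) :=
    hFi.mul_bdd (c := B) (hG.comp hT).aestronglyMeasurable
      (Eventually.of_forall fun x => hGB _)
  have hsum : ∫ x, F x * fejerConv D G (T x)
      = ((D : ℂ)⁻¹) ^ d * ∑ q : Fin d → Fin D × Fin D, a (boxDiff q) := by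
    rw [hconv, integral_const_mul, integral_finsetSum _ fun q _ => (hFe _).mul_const _]
    simp_rw [integral_mul_const]
    rfl
  have ha0 : a 0 = (∫ x, F x) * ∫ x, G x := by
    have h0 : ∀ x : Torus d, UnitAddTorus.mFourier (0 : Fin d → ℤ) x = 1 := fun x => by
      simp [UnitAddTorus.mFourier]
    simp only [ha, h0, mul_one, one_mul]
  have hdiff : (∫ x, F x * fejerConv D G (T x)) - (∫ x, F x) * ∫ x, G x
      = ((D : ℂ)⁻¹) ^ d *
        ∑ q : Fin d → Fin D × Fin D, if boxDiff q = 0 then 0 else a (boxDiff q) := by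
    have h1 : ∀ q : Fin d → Fin D × Fin D, a (boxDiff q)
        = (if boxDiff q = 0 then a 0 else 0) + if boxDiff q = 0 then 0 else a (boxDiff q) := by
      intro q
      split_ifs with h
      · rw [h, add_zero]
      · rw [zero_add]
    rw [hsum, Finset.sum_congr rfl fun q _ => h1 q, Finset.sum_add_distrib, ← Finset.sum_filter,
      Finset.sum_const, card_boxDiff_eq_zero, mul_add, nsmul_eq_mul, ← ha0]
    have hDc : (D : ℂ) ≠ 0 := by exact_mod_cast hD.ne'
    push_cast
    rw [← mul_assoc, ← mul_pow, inv_mul_cancel₀ hDc]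
    ring
  have hbound1 : ‖(∫ x, F x * G (T x)) - ∫ x, F x * fejerConv D G (T x)‖
      ≤ B * (H * ((1 + d) * (D : ℝ) ^ (-(η / 2)))) := by
    rw [← integral_sub hGi hconvi]
    refine norm_integral_torus_le fun x => ?_
    rw [← mul_sub, norm_mul]
    exact mul_le_mul (hFB x) (norm_sub_fejerConv_le hD hη hη1 hH hG hGB hHol _)
      (norm_nonneg _) hB0
  have hbound2 : ‖(∫ x, F x * fejerConv D G (T x)) - (∫ x, F x) * ∫ x, G x‖
      ≤ (D : ℝ) ^ d * (E * B) := by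
    rw [hdiff, norm_mul]
    have h2 : ‖∑ q : Fin d → Fin D × Fin D, if boxDiff q = 0 then 0 else a (boxDiff q)‖
        ≤ ∑ _q : Fin d → Fin D × Fin D, E * B := by
      refine norm_sum_le_of_le _ fun q _ => ?_
      split_ifs with h
      · rw [norm_zero]
        positivity
      · rw [ha, norm_mul]
        refine mul_le_mul (hE _ h (abs_boxDiff_le q)) (norm_integral_torus_le fun y => ?_)
          (norm_nonneg _) hE0
        rw [norm_mul, norm_mFourier_apply, one_mul]
        exact hGB y
    calc ‖((D : ℂ)⁻¹) ^ d‖ * ‖∑ q : Fin d → Fin D × Fin D,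
          if boxDiff q = 0 then 0 else a (boxDiff q)‖
        ≤ ((D : ℝ)⁻¹) ^ d * ∑ _q : Fin d → Fin D × Fin D, E * B := by
          rw [norm_pow, norm_inv, Complex.norm_natCast]
          gcongr
      _ = (D : ℝ) ^ d * (E * B) := by
          simp only [Finset.sum_const, Finset.card_univ, Fintype.card_fun, Fintype.card_prod,
            Fintype.card_fin, nsmul_eq_mul]
          push_cast
          rw [mul_pow, inv_pow]
          field_simp
  calc ‖(∫ x, F x * G (T x)) - (∫ x, F x) * ∫ x, G x‖
      = ‖((∫ x, F x * G (T x)) - ∫ x, F x * fejerConv D G (T x))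
          + ((∫ x, F x * fejerConv D G (T x)) - (∫ x, F x) * ∫ x, G x)‖ := by
        rw [sub_add_sub_cancel]
    _ ≤ _ := (norm_add_le _ _).trans (add_le_add hbound1 hbound2)

/-- Variation of `F` of order at most `A * c ^ η` along every vector whose backward orbit under
`S` stays within distance `c` of the origin. -/
def HolderAlongPast {d : ℕ} (S : Matrix (Fin d) (Fin d) ℤ) (η A : ℝ) (F : Torus d → ℂ) : Prop :=
  ∀ (v : Fin d → ℝ) (c : ℝ), 0 ≤ c →
    (∀ k : ℕ, ‖Matrix.mulVec ((S⁻¹ ^ k).map (Int.cast : ℤ → ℝ)) v‖ ≤ c) →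
    ∀ x, ‖F (x + torusProj v) - F x‖ ≤ A * c ^ η

lemma norm_integral_mul_mFourier_le {d : ℕ} {S : Matrix (Fin d) (Fin d) ℤ}
    (hS : IsUnit S.det) {A η b : ℝ} {F : Torus d → ℂ} (hF : Measurable F) {B : ℝ}
    (hFB : ∀ x, ‖F x‖ ≤ B)
    (hFs : HolderAlongPast S η A F) (n : Fin d → ℤ) {w : Fin d → ℝ} (hw : ∑ i, (n i : ℝ) * w i = 1 / 2) (p : ℕ) (hb : 0 ≤ b)
    (hwb : ∀ j, p ≤ j → ‖Matrix.mulVec ((S⁻¹ ^ j).map (Int.cast : ℤ → ℝ)) w‖ ≤ b) :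
    ‖∫ x, F x * UnitAddTorus.mFourier n (torusAut (S ^ p) x)‖ ≤ A * b ^ η := by
  set e : Torus d → ℂ := fun x => UnitAddTorus.mFourier n (torusAut (S ^ p) x) with he
  set v : Fin d → ℝ := Matrix.mulVec ((S⁻¹ ^ p).map (Int.cast : ℤ → ℝ)) w with hv
  have hmeas : Measurable e :=
    (UnitAddTorus.mFourier n).continuous.measurable.comp (continuous_torusAut _).measurable
  have hen : ∀ x, ‖e x‖ = 1 := fun x => norm_mFourier_apply _ _
  have hmap : ∀ M N : Matrix (Fin d) (Fin d) ℤ, Matrix.mulVec (M.map (Int.cast : ℤ → ℝ))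
      (Matrix.mulVec (N.map (Int.cast : ℤ → ℝ)) w)
      = Matrix.mulVec ((M * N).map (Int.cast : ℤ → ℝ)) w := fun M N => by
    rw [Matrix.mulVec_mulVec]
    congr 1
    exact (Matrix.map_mul (f := Int.castRingHom ℝ)).symm
  have hTv : torusAut (S ^ p) (torusProj v) = torusProj w := by
    rw [torusAut_torusProj, hv, hmap]
    have : S ^ p * S⁻¹ ^ p = 1 := by
      rw [Matrix.inv_pow', Matrix.mul_nonsing_inv]
      rw [Matrix.det_pow]
      exact hS.pow p
    rw [this]
    congr 1
    simp
  have hev : ∀ x, e (x + torusProj v) = - e x := fun x => by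
    simp only [he]
    rw [torusAut_add, mFourier_add_apply, hTv, mFourier_torusProj n w hw]
    ring
  have hFi := integrable_of_bounded hF hFB
  have hi : ∀ u, Integrable fun x => F (x + u) * e x := fun u =>
    (integrable_of_bounded (hF.comp (measurable_add_const u)) fun x => hFB _).mul_bdd (c := 1)
      hmeas.aestronglyMeasurable (Eventually.of_forall fun x => (hen x).le)
  have h1 : ∫ x, F x * e x = - ∫ x, F (x + torusProj v) * e x := by
    rw [← integral_add_right_eq_self _ (torusProj v), ← integral_neg]
    simp only [hev, mul_neg]
  have h2 : (2 : ℂ) * ∫ x, F x * e x = - ∫ x, (F (x + torusProj v) - F x) * e x := by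
    have h0 := hi 0
    simp only [add_zero] at h0
    simp_rw [sub_mul]
    rw [integral_sub (hi _) h0, two_mul]
    nth_rewrite 1 [h1]
    ring
  have h3 : ‖(2 : ℂ) * ∫ x, F x * e x‖ ≤ A * b ^ η := by
    rw [h2, norm_neg]
    refine norm_integral_torus_le fun x => ?_
    rw [norm_mul, hen, mul_one]
    refine hFs v b hb (fun k => ?_) x
    rw [hv, hmap, ← pow_add]
    exact hwb _ (Nat.le_add_left _ _)
  rw [norm_mul, Complex.norm_ofNat] at h3
  linarith [norm_nonneg (∫ x, F x * e x)]

lemma exists_decorrelation_bound {d : ℕ} (hd : 0 < d) {S : Matrix (Fin d) (Fin d) ℤ}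
    (hdet : S.det = 1) (hEig : NoRootOfUnityEigenvalue S) {η : ℝ} (hη : 0 < η) (hη1 : η ≤ 1) :
    ∃ C ρ : ℝ, 0 ≤ C ∧ 0 < ρ ∧ ρ < 1 ∧ ∀ (F G : Torus d → ℂ) (A H B : ℝ) (p : ℕ), 0 ≤ A → 0 ≤ H →
      Measurable F → Measurable G → (∀ x, ‖F x‖ ≤ B) → (∀ x, ‖G x‖ ≤ B) →
      HolderAlongPast S η A F → (∀ x y, ‖G x - G y‖ ≤ H * ‖x - y‖ ^ η) →
      ‖(∫ x, F x * G (torusAut (S ^ p) x)) - (∫ x, F x) * ∫ x, G x‖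
        ≤ C * (B * (A + H)) * ρ ^ p := by
  obtain ⟨C₀, m, ρ, hC₀, hρ0, hρ1, hkey⟩ := exists_contracted_vector hd S hdet hEig
  set K := d + m with hK
  set σ := ρ ^ η with hσ
  have hσ0 : 0 < σ := Real.rpow_pos_of_pos hρ0 _
  have hσ1 : σ < 1 := Real.rpow_lt_one hρ0.le hρ1 hη
  set t := σ ^ ((K + 1 : ℕ) : ℝ)⁻¹ with ht
  have ht0 : 0 < t := Real.rpow_pos_of_pos hσ0 _
  have ht1 : t < 1 := Real.rpow_lt_one hσ0.le hσ1 (by positivity)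
  have htK : t ^ (K + 1) = σ := Real.rpow_inv_natCast_pow hσ0.le (Nat.succ_ne_zero K)
  set c₁ := (C₀ * (d : ℝ) ^ m) ^ η with hc₁
  have hc₁0 : 0 ≤ c₁ := by positivity
  have htη0 : 0 < t ^ (η / 2) := Real.rpow_pos_of_pos ht0 _
  have htle : t ≤ t ^ (η / 2) := by
    simpa using Real.rpow_le_rpow_of_exponent_ge ht0 ht1.le (by linarith : η / 2 ≤ 1)
  refine ⟨(1 + d) + c₁ * 2 ^ K, t ^ (η / 2), by positivity, htη0,
    Real.rpow_lt_one ht0.le ht1 (by linarith), ?_⟩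
  intro F G A H B p hA hH hF hG hFB hGB hFs hHol
  have hB0 : 0 ≤ B := (norm_nonneg _).trans (hFB 0)
  have hS : IsUnit S.det := by rw [hdet]; exact isUnit_one
  have hq1 : 1 ≤ (t⁻¹) ^ p := one_le_pow₀ ((one_le_inv₀ ht0).2 ht1.le)
  set D := ⌈(t⁻¹) ^ p⌉₊ with hD
  have hDge : (t⁻¹) ^ p ≤ D := Nat.le_ceil _
  have hDle : (D : ℝ) ≤ 2 * (t⁻¹) ^ p := by
    have := Nat.ceil_lt_add_one (zero_le_one.trans hq1)
    rw [← hD] at this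
    linarith
  have hD1 : (1 : ℝ) ≤ D := hq1.trans hDge
  have hDpos : 0 < D := by exact_mod_cast zero_lt_one.trans_le hD1
  have hmain := norm_integral_mul_comp_sub_le hDpos hη hη1 hH
    (E := A * (c₁ * (D : ℝ) ^ m * σ ^ p)) (by positivity)
    (continuous_torusAut (S ^ p)).measurable hF hFB hG hGB hHol (by
      intro n hn hnD
      obtain ⟨w, hw, hwj⟩ := hkey n hn
      have hsum : ∑ i, |(n i : ℝ)| ≤ d * D := by
        calc ∑ i, |(n i : ℝ)| ≤ ∑ _i : Fin d, (D : ℝ) :=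
              Finset.sum_le_sum fun i _ => by exact_mod_cast hnD i
          _ = d * D := by simp
      have hb : 0 ≤ C₀ * ((d : ℝ) * D) ^ m * ρ ^ p := by positivity
      refine (norm_integral_mul_mFourier_le hS hF hFB hFs n hw p hb fun j hj => ?_).trans ?_
      · refine (hwj j).trans ?_
        have : ρ ^ j ≤ ρ ^ p := pow_le_pow_of_le_one hρ0.le hρ1.le hj
        have h0 : 0 ≤ ∑ i, |(n i : ℝ)| := Finset.sum_nonneg fun _ _ => abs_nonneg _
        gcongr
      · refine mul_le_mul_of_nonneg_left ?_ hA
        have h1 : C₀ * ((d : ℝ) * D) ^ m * ρ ^ p = (C₀ * (d : ℝ) ^ m) * (D : ℝ) ^ m * ρ ^ p := by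
          rw [mul_pow]
          ring
        rw [h1, Real.mul_rpow (by positivity) (by positivity),
          Real.mul_rpow (by positivity) (by positivity)]
        have h2 : (ρ ^ p) ^ η = σ ^ p := by
          rw [hσ, ← Real.rpow_natCast, ← Real.rpow_mul hρ0.le, mul_comm,
            Real.rpow_mul hρ0.le, Real.rpow_natCast]
        have h3 : ((D : ℝ) ^ m) ^ η ≤ (D : ℝ) ^ m := by
          simpa using Real.rpow_le_rpow_of_exponent_le (one_le_pow₀ hD1 : 1 ≤ (D : ℝ) ^ m) hη1
        rw [h2]
        gcongr)
  refine hmain.trans ?_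
  have e1 : (D : ℝ) ^ (-(η / 2)) ≤ (t ^ (η / 2)) ^ p := by
    calc (D : ℝ) ^ (-(η / 2)) ≤ ((t⁻¹) ^ p) ^ (-(η / 2)) :=
          Real.rpow_le_rpow_of_nonpos (by positivity) hDge (by linarith)
      _ = (t ^ (η / 2)) ^ p := by
          rw [inv_pow, Real.inv_rpow (by positivity), Real.rpow_neg (by positivity), inv_inv,
            ← Real.rpow_natCast, ← Real.rpow_mul ht0.le, mul_comm, Real.rpow_mul ht0.le,
            Real.rpow_natCast]
  have e2 : (D : ℝ) ^ d * ((D : ℝ) ^ m * σ ^ p) ≤ 2 ^ K * (t ^ (η / 2)) ^ p := by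
    calc (D : ℝ) ^ d * ((D : ℝ) ^ m * σ ^ p) = (D : ℝ) ^ K * σ ^ p := by
          rw [hK, pow_add]
          ring
      _ ≤ (2 * (t⁻¹) ^ p) ^ K * σ ^ p := by gcongr
      _ = 2 ^ K * t ^ p := by
          rw [← htK, mul_pow, inv_pow, inv_pow, ← pow_mul, ← pow_mul, add_mul, pow_add, one_mul,
            mul_comm K p]
          field_simp
          ring
      _ ≤ 2 ^ K * (t ^ (η / 2)) ^ p := by gcongr
  calc B * (H * ((1 + d) * (D : ℝ) ^ (-(η / 2))))
        + (D : ℝ) ^ d * (A * (c₁ * (D : ℝ) ^ m * σ ^ p) * B)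
      = B * H * (1 + d) * (D : ℝ) ^ (-(η / 2))
        + A * B * c₁ * ((D : ℝ) ^ d * ((D : ℝ) ^ m * σ ^ p)) := by ring
    _ ≤ B * H * (1 + d) * (t ^ (η / 2)) ^ p + A * B * c₁ * (2 ^ K * (t ^ (η / 2)) ^ p) := by
        gcongr
    _ ≤ ((1 + d) + c₁ * 2 ^ K) * (B * (A + H)) * (t ^ (η / 2)) ^ p := by
        have h1 : 0 ≤ B * A * (1 + d) * (t ^ (η / 2)) ^ p := by positivity
        have h2 : 0 ≤ B * H * c₁ * 2 ^ K * (t ^ (η / 2)) ^ p := by positivity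
        linarith

lemma sum_pow_le_of_injOn {θ : ℝ} (h0 : 0 ≤ θ) (h1 : θ < 1) {s : Finset ℕ} {g : ℕ → ℕ}
    (hg : Set.InjOn g s) : ∑ l ∈ s, θ ^ g l ≤ (1 - θ)⁻¹ := by
  rw [← Finset.sum_image (f := fun n => θ ^ n) hg, ← tsum_geometric_of_lt_one h0 h1]
  exact (summable_geometric_of_lt_one h0 h1).sum_le_tsum _ fun _ _ => by positivity

lemma sum_range_pow_dist_le {θ : ℝ} (h0 : 0 ≤ θ) (h1 : θ < 1) (k N : ℕ) :
    ∑ l ∈ Finset.range N, θ ^ Nat.dist k l ≤ 2 * (1 - θ)⁻¹ := by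
  rw [← Finset.sum_filter_add_sum_filter_not _ (fun l => l ≤ k), two_mul]
  refine add_le_add (sum_pow_le_of_injOn h0 h1 ?_) (sum_pow_le_of_injOn h0 h1 ?_)
  · intro a ha b hb hab
    simp only [Finset.coe_filter, Set.mem_ofPred_eq] at ha hb
    rw [Nat.dist_eq_sub_of_le_right ha.2, Nat.dist_eq_sub_of_le_right hb.2] at hab
    omega
  · intro a ha b hb hab
    simp only [Finset.coe_filter, Set.mem_ofPred_eq, not_le] at ha hb
    rw [Nat.dist_eq_sub_of_le ha.2.le, Nat.dist_eq_sub_of_le hb.2.le] at hab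
    omega

/-- Sum over the three pairings of four indices of a geometric weight of the paired distances. -/
def pairingWeight (θ : ℝ) (a b c e : ℕ) : ℝ :=
  θ ^ Nat.dist a b * θ ^ Nat.dist c e + θ ^ Nat.dist a c * θ ^ Nat.dist b e +
    θ ^ Nat.dist a e * θ ^ Nat.dist b c

lemma sum_pairingWeight_le {θ : ℝ} (h0 : 0 ≤ θ) (h1 : θ < 1) (N : ℕ) :
    ∑ a ∈ Finset.range N, ∑ b ∈ Finset.range N, ∑ c ∈ Finset.range N, ∑ e ∈ Finset.range N,
      pairingWeight θ a b c e ≤ 3 * (2 * (1 - θ)⁻¹) ^ 2 * (N : ℝ) ^ 2 := by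
  set W := 2 * (1 - θ)⁻¹ with hW
  have hW0 : 0 ≤ W := mul_nonneg zero_le_two (inv_nonneg.2 (by linarith))
  have hs : ∀ k, ∑ l ∈ Finset.range N, θ ^ Nat.dist k l ≤ W := fun k =>
    sum_range_pow_dist_le h0 h1 k N
  have hs0 : ∀ k, 0 ≤ ∑ l ∈ Finset.range N, θ ^ Nat.dist k l := fun k =>
    Finset.sum_nonneg fun _ _ => by positivity
  have hinner : ∀ a b, ∑ c ∈ Finset.range N, ∑ e ∈ Finset.range N, pairingWeight θ a b c e
      ≤ θ ^ Nat.dist a b * (N * W) + 2 * W ^ 2 := by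
    intro a b
    simp only [pairingWeight, Finset.sum_add_distrib, ← Finset.mul_sum, ← Finset.sum_mul]
    have e1 : ∑ c ∈ Finset.range N, ∑ e ∈ Finset.range N, θ ^ Nat.dist c e ≤ N * W := by
      calc _ ≤ ∑ _c ∈ Finset.range N, W := Finset.sum_le_sum fun c _ => hs c
        _ = N * W := by simp
    have e2 := mul_le_mul (hs a) (hs b) (hs0 b) hW0
    have e3 := mul_le_mul_of_nonneg_left e1 (pow_nonneg h0 (Nat.dist a b))
    nlinarith
  have hmid : ∀ a, ∑ b ∈ Finset.range N, ∑ c ∈ Finset.range N, ∑ e ∈ Finset.range N,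
      pairingWeight θ a b c e ≤ 3 * W ^ 2 * N := by
    intro a
    calc _ ≤ ∑ b ∈ Finset.range N, (θ ^ Nat.dist a b * (N * W) + 2 * W ^ 2) :=
          Finset.sum_le_sum fun b _ => hinner a b
      _ = (∑ b ∈ Finset.range N, θ ^ Nat.dist a b) * (N * W) + N * (2 * W ^ 2) := by
          simp [Finset.sum_add_distrib, ← Finset.sum_mul]
      _ ≤ W * (N * W) + N * (2 * W ^ 2) := by
          gcongr
          exact hs a
      _ = 3 * W ^ 2 * N := by ring
  calc _ ≤ ∑ _a ∈ Finset.range N, 3 * W ^ 2 * (N : ℝ) := Finset.sum_le_sum fun a _ => hmid a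
    _ = 3 * W ^ 2 * (N : ℝ) ^ 2 := by
        simp only [Finset.sum_const, Finset.card_range, nsmul_eq_mul]
        ring

/-- A property of quadruples invariant under adjacent transpositions holds everywhere as soon as
it holds for nondecreasing quadruples. -/
lemma forall_of_sorted_of_swap {P : ℕ → ℕ → ℕ → ℕ → Prop}
    (h12 : ∀ a b c e, P a b c e → P b a c e) (h23 : ∀ a b c e, P a b c e → P a c b e)
    (h34 : ∀ a b c e, P a b c e → P a b e c)
    (hs : ∀ a b c e, a ≤ b → b ≤ c → c ≤ e → P a b c e) (a b c e : ℕ) : P a b c e := by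
  have h3 : ∀ a b c e, a ≤ b → b ≤ c → P a b c e := by
    intro a b c e hab hbc
    rcases le_total c e with h | h
    · exact hs _ _ _ _ hab hbc h
    refine h34 _ _ _ _ ?_
    rcases le_total b e with h' | h'
    · exact hs _ _ _ _ hab h' h
    refine h23 _ _ _ _ ?_
    rcases le_total a e with h'' | h''
    · exact hs _ _ _ _ h'' h' hbc
    · exact h12 _ _ _ _ (hs _ _ _ _ h'' hab hbc)
  have h2 : ∀ a b c e, a ≤ b → P a b c e := by
    intro a b c e hab
    rcases le_total b c with h | h
    · exact h3 _ _ _ _ hab h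
    refine h23 _ _ _ _ ?_
    rcases le_total a c with h' | h'
    · exact h3 _ _ _ _ h' h
    · exact h12 _ _ _ _ (h3 _ _ _ _ h' hab)
  rcases le_total a b with h | h
  · exact h2 _ _ _ _ h
  · exact h12 _ _ _ _ (h2 _ _ _ _ h)

lemma exists_sum_le_of_gap_bounds {Q : ℕ → ℕ → ℕ → ℕ → ℝ} {C ρ : ℝ} (hC : 0 ≤ C) (hρ0 : 0 ≤ ρ)
    (hρ1 : ρ < 1) (hQ : ∀ a b c e, 0 ≤ Q a b c e)
    (h12 : ∀ a b c e, Q b a c e = Q a b c e) (h23 : ∀ a b c e, Q a c b e = Q a b c e)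
    (h34 : ∀ a b c e, Q a b e c = Q a b c e)
    (hfst : ∀ a b c e, a ≤ b → b ≤ c → c ≤ e → Q a b c e ≤ C * ρ ^ (b - a))
    (hlst : ∀ a b c e, a ≤ b → b ≤ c → c ≤ e → Q a b c e ≤ C * ρ ^ (e - c)) :
    ∃ B : ℝ, ∀ N : ℕ, ∑ a ∈ Finset.range N, ∑ b ∈ Finset.range N, ∑ c ∈ Finset.range N,
      ∑ e ∈ Finset.range N, Q a b c e ≤ B * (N : ℝ) ^ 2 := by
  set θ := Real.sqrt ρ with hθ
  have hθ0 : 0 ≤ θ := Real.sqrt_nonneg _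
  have hθ1 : θ < 1 := by
    rw [hθ, Real.sqrt_lt' one_pos]
    simpa using hρ1
  have hθ2 : θ ^ 2 = ρ := Real.sq_sqrt hρ0
  have hle : ∀ a b c e, Q a b c e ≤ C * pairingWeight θ a b c e := by
    refine forall_of_sorted_of_swap (P := fun a b c e => Q a b c e ≤ C * pairingWeight θ a b c e)
      ?_ ?_ ?_ ?_
    · intro a b c e h
      rw [h12]
      refine h.trans (le_of_eq ?_)
      simp only [pairingWeight, Nat.dist_comm b a]
      ring
    · intro a b c e h
      rw [h23]
      refine h.trans (le_of_eq ?_)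
      simp only [pairingWeight, Nat.dist_comm c b]
      ring
    · intro a b c e h
      rw [h34]
      refine h.trans (le_of_eq ?_)
      simp only [pairingWeight, Nat.dist_comm e c]
      ring
    · intro a b c e hab hbc hce
      have h1 := hfst a b c e hab hbc hce
      have h2 := hlst a b c e hab hbc hce
      have h3 : Q a b c e ≤ C * (θ ^ (b - a) * θ ^ (e - c)) := by
        refine le_of_sq_le_sq ?_ (by positivity)
        calc Q a b c e ^ 2 = Q a b c e * Q a b c e := sq _
          _ ≤ (C * ρ ^ (b - a)) * (C * ρ ^ (e - c)) :=
              mul_le_mul h1 h2 (hQ _ _ _ _) (by positivity)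
          _ = (C * (θ ^ (b - a) * θ ^ (e - c))) ^ 2 := by
              rw [← hθ2]
              ring
      refine h3.trans (mul_le_mul_of_nonneg_left ?_ hC)
      rw [pairingWeight, Nat.dist_eq_sub_of_le hab, Nat.dist_eq_sub_of_le hce, add_assoc]
      exact le_add_of_nonneg_right (by positivity)
  refine ⟨C * (3 * (2 * (1 - θ)⁻¹) ^ 2), fun N => ?_⟩
  calc _ ≤ ∑ a ∈ Finset.range N, ∑ b ∈ Finset.range N, ∑ c ∈ Finset.range N,
        ∑ e ∈ Finset.range N, C * pairingWeight θ a b c e := by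
        gcongr
        exact hle _ _ _ _
    _ ≤ C * (3 * (2 * (1 - θ)⁻¹) ^ 2 * (N : ℝ) ^ 2) := by
        simp only [← Finset.mul_sum]
        exact mul_le_mul_of_nonneg_left (sum_pairingWeight_le hθ0 hθ1 N) hC
    _ = _ := by ring

lemma IsHolder.exists_sup_norm {d : ℕ} {η : ℝ} (hη : 0 < η) {f : Torus d → ℝ}
    (hf : IsHolder η f) :
    ∃ c : ℝ, 0 ≤ c ∧ ∀ x y : Torus d, |f x - f y| ≤ c * ‖x - y‖ ^ min η 1 := by
  obtain ⟨c, hc⟩ := hf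
  refine ⟨|c| * Real.sqrt d ^ η, by positivity, fun x y => (hc x y).trans ?_⟩
  have h1 : torusDist x y ≤ Real.sqrt d * ‖x - y‖ := by
    rw [torusDist, ← Real.sqrt_sq (norm_nonneg (x - y)), ← Real.sqrt_mul (Nat.cast_nonneg d)]
    refine Real.sqrt_le_sqrt ?_
    calc ∑ i, ‖x i - y i‖ ^ 2 ≤ ∑ _i : Fin d, ‖x - y‖ ^ 2 := by
          gcongr with i
          exact norm_le_pi_norm (x - y) i
      _ = d * ‖x - y‖ ^ 2 := by simp
  have h2 : ‖x - y‖ ≤ 1 := by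
    refine (pi_norm_le_iff_of_nonneg zero_le_one).2 fun i => ?_
    have := AddCircle.norm_le_half_period (1 : ℝ) (x := (x - y) i) one_ne_zero
    rw [abs_one] at this
    linarith
  have h0 : 0 ≤ torusDist x y := Real.sqrt_nonneg _
  calc c * torusDist x y ^ η ≤ |c| * (Real.sqrt d * ‖x - y‖) ^ η :=
        mul_le_mul (le_abs_self c) (Real.rpow_le_rpow h0 h1 hη.le) (by positivity) (abs_nonneg c)
    _ = |c| * Real.sqrt d ^ η * ‖x - y‖ ^ η := by
        rw [Real.mul_rpow (Real.sqrt_nonneg _) (norm_nonneg _), mul_assoc]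
    _ ≤ |c| * Real.sqrt d ^ η * ‖x - y‖ ^ min η 1 := by
        refine mul_le_mul_of_nonneg_left ?_ (by positivity)
        exact Real.rpow_le_rpow_of_exponent_ge' (norm_nonneg _) h2 (by positivity) (min_le_left _ _)

lemma integral_comp_torusAut {d : ℕ} {A : Matrix (Fin d) (Fin d) ℤ} (hA : IsUnit A.det)
    {E : Type*} [NormedAddCommGroup E] [NormedSpace ℝ E] {g : Torus d → E}
    (hg : AEStronglyMeasurable g volume) : ∫ x, g (torusAut A x) = ∫ x, g x := by
  have h := measurePreserving_torusAut hA
  rw [← h.map_eq] at hg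
  conv_rhs => rw [← h.map_eq]
  exact (integral_map h.measurable.aemeasurable hg).symm

lemma torusAut_pow_add {d : ℕ} (S : Matrix (Fin d) (Fin d) ℤ) (j k : ℕ) (x : Torus d) :
    torusAut (S ^ (j + k)) x = torusAut (S ^ j) (torusAut (S ^ k) x) := by
  rw [pow_add, torusAut_mul]

lemma torusAut_inv_pow_sub {d : ℕ} {S : Matrix (Fin d) (Fin d) ℤ} (hS : IsUnit S.det) {j k : ℕ}
    (h : j ≤ k) (x : Torus d) :
    torusAut (S⁻¹ ^ (k - j)) (torusAut (S ^ k) x) = torusAut (S ^ j) x := by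
  rw [← torusAut_mul]
  congr 1
  have h1 : S⁻¹ ^ (k - j) * S ^ (k - j) = 1 := by
    rw [Matrix.inv_pow', Matrix.nonsing_inv_mul]
    rw [Matrix.det_pow]
    exact hS.pow _
  calc S⁻¹ ^ (k - j) * S ^ k = S⁻¹ ^ (k - j) * (S ^ (k - j) * S ^ j) := by
        rw [← pow_add, Nat.sub_add_cancel h]
    _ = S ^ j := by rw [← mul_assoc, h1, one_mul]

lemma abs_past_sub_le {d : ℕ} {S : Matrix (Fin d) (Fin d) ℤ} {η c : ℝ} (hη : 0 ≤ η) (hc : 0 ≤ c)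
    {f : Torus d → ℝ} (hf : ∀ x y, |f x - f y| ≤ c * ‖x - y‖ ^ η) {v : Fin d → ℝ} {b : ℝ}
    (hv : ∀ k : ℕ, ‖Matrix.mulVec ((S⁻¹ ^ k).map (Int.cast : ℤ → ℝ)) v‖ ≤ b) (k : ℕ)
    (x : Torus d) :
    |f (torusAut (S⁻¹ ^ k) (x + torusProj v)) - f (torusAut (S⁻¹ ^ k) x)| ≤ c * b ^ η := by
  refine (hf _ _).trans (mul_le_mul_of_nonneg_left ?_ hc)
  rw [torusAut_add, add_sub_cancel_left, torusAut_torusProj]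
  exact Real.rpow_le_rpow (norm_nonneg _) ((norm_torusProj_le _).trans (hv k)) hη

lemma norm_exp_I_mul_sub_le (a b : ℝ) :
    ‖Complex.exp (Complex.I * a) - Complex.exp (Complex.I * b)‖ ≤ |a - b| := by
  have h : Complex.exp (Complex.I * a) - Complex.exp (Complex.I * b)
      = Complex.exp (Complex.I * b) * (Complex.exp (Complex.I * ((a - b : ℝ) : ℂ)) - 1) := by
    rw [mul_sub, ← Complex.exp_add, mul_one]
    congr 2
    push_cast
    ring
  rw [h, norm_mul, mul_comm Complex.I (b : ℂ), Complex.norm_exp_ofReal_mul_I, one_mul]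
  exact Real.norm_exp_I_mul_ofReal_sub_one_le

lemma norm_exp_sum_sub_le {ι : Type*} (s : Finset ι) (α u v : ι → ℝ) {δ : ℝ}
    (h : ∀ k ∈ s, |u k - v k| ≤ δ) :
    ‖Complex.exp (Complex.I * ((∑ k ∈ s, α k * u k : ℝ) : ℂ)) -
      Complex.exp (Complex.I * ((∑ k ∈ s, α k * v k : ℝ) : ℂ))‖ ≤ (∑ k ∈ s, |α k|) * δ := by
  refine (norm_exp_I_mul_sub_le _ _).trans ?_
  rw [← Finset.sum_sub_distrib, Finset.sum_mul]
  refine (Finset.abs_sum_le_sum_abs _ _).trans (Finset.sum_le_sum fun k hk => ?_)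
  rw [← mul_sub, abs_mul]
  exact mul_le_mul_of_nonneg_left (h k hk) (abs_nonneg _)

lemma norm_exp_I_mul_ofReal_eq_one (a : ℝ) : ‖Complex.exp (Complex.I * a)‖ = 1 := by
  rw [mul_comm, Complex.norm_exp_ofReal_mul_I]

lemma cond3_torusAut {d : ℕ} {S : Matrix (Fin d) (Fin d) ℤ} (hS : IsUnit S.det)
    {f : Torus d → ℝ} (hf : Measurable f) {b : ℝ} (hb : ∀ x, |f x| ≤ b) (hcent : ∫ x, f x = 0) :
    Cond3 (volume : Measure (Torus d)) fun k x => f (torusAut (S ^ k) x) := by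
  have hT : ∀ k : ℤ, Measurable fun x => f (torusAut (S ^ k) x) := fun k =>
    hf.comp (continuous_torusAut _).measurable
  refine ⟨fun j q k => ?_, fun k => ?_, fun k => ?_⟩
  · have hmp := measurePreserving_torusAut (hS.det_zpow j)
    have hg : Measurable fun (x : Torus d) (i : Fin q) => f (torusAut (S ^ k i) x) :=
      measurable_pi_lambda _ fun i => hT _
    conv_rhs => rw [← hmp.map_eq]
    rw [Measure.map_map hg hmp.measurable]
    congr 1
    funext x i
    simp only [Function.comp_apply]
    rw [torusAut_zpow_add hS]
  · rw [integral_comp_torusAut (hS.det_zpow k) hf.aestronglyMeasurable, hcent]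
  · refine Integrable.of_bound ((hT k).pow_const 4).aestronglyMeasurable (b ^ 4)
      (Eventually.of_forall fun x => ?_)
    rw [norm_pow, Real.norm_eq_abs]
    exact pow_le_pow_left₀ (abs_nonneg _) (hb _) 4

lemma cond5_torusAut {d : ℕ} (hd : 0 < d) {S : Matrix (Fin d) (Fin d) ℤ} (hdet : S.det = 1)
    (hEig : NoRootOfUnityEigenvalue S) {η c : ℝ} (hη : 0 < η) (hη1 : η ≤ 1) (hc : 0 ≤ c)
    {f : Torus d → ℝ} (hf : Measurable f) (hfh : ∀ x y, |f x - f y| ≤ c * ‖x - y‖ ^ η) :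
    Cond5 (volume : Measure (Torus d)) fun k x => f (torusAut (S ^ k) x) := by
  have hS : IsUnit S.det := by rw [hdet]; exact isUnit_one
  obtain ⟨C, ρ, hC, hρ0, hρ1, hdec⟩ := exists_decorrelation_bound hd hdet hEig hη hη1
  obtain ⟨Λ, hΛ, hΛT⟩ := exists_norm_torusAut_pow_le S
  have hΛ0 : 0 < Λ := zero_lt_one.trans_le hΛ
  obtain ⟨r, hr⟩ := exists_pow_lt_of_lt_one (inv_pos.2 hΛ0) hρ1
  have hr' : Λ * ρ ^ (r + 1) < 1 := by
    have h1 : ρ ^ (r + 1) ≤ ρ ^ r := pow_le_pow_of_le_one hρ0.le hρ1.le (Nat.le_succ r)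
    calc Λ * ρ ^ (r + 1) < Λ * Λ⁻¹ := by
          gcongr
          exact h1.trans_lt hr
      _ = 1 := mul_inv_cancel₀ hΛ0.ne'
  refine ⟨C * c + 1, by positivity, fun p s => Λ ^ s * ρ ^ p, r + 1, by omega,
    fun p s => by positivity, fun p s => ?_, ?_, ?_⟩
  · have := pow_le_pow_of_le_one hρ0.le hρ1.le (Nat.le_succ p)
    simp only
    gcongr
  · have hlim := tendsto_self_mul_const_pow_of_lt_one
      (by positivity : 0 ≤ Λ * ρ ^ (r + 1)) hr'
    refine squeeze_zero (fun s => by positivity) (fun s => ?_) hlim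
    have h1 : Λ ^ s * ρ ^ ((r + 1) * s) = (Λ * ρ ^ (r + 1)) ^ s := by rw [mul_pow, pow_mul]
    simp only [h1]
    refine mul_le_mul_of_nonneg_right ?_ (by positivity)
    rw [Real.sqrt_le_left (by positivity)]
    have : s ≤ s ^ 2 := Nat.le_self_pow two_ne_zero s
    exact_mod_cast this
  · intro n₁ n₂ n₃ n₄ _ h₂₃ h₃₄ α β
    set F : Torus d → ℂ := fun x => Complex.exp (Complex.I *
      ((∑ k ∈ Finset.Icc n₁ n₂, α k * f (torusAut (S⁻¹ ^ (n₂ - k)) x) : ℝ) : ℂ)) with hF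
    set G : Torus d → ℂ := fun x => Complex.exp (Complex.I *
      ((∑ k ∈ Finset.Icc n₃ n₄, β k * f (torusAut (S ^ (k - n₃)) x) : ℝ) : ℂ)) with hG
    have hTm : ∀ A : Matrix (Fin d) (Fin d) ℤ, Measurable (torusAut A) := fun A =>
      (continuous_torusAut A).measurable
    have hFm : Measurable F := by
      have : ∀ k, Measurable fun x => f (torusAut (S⁻¹ ^ (n₂ - k)) x) := fun k => hf.comp (hTm _)
      fun_prop
    have hGm : Measurable G := by
      have : ∀ k, Measurable fun x => f (torusAut (S ^ (k - n₃)) x) := fun k => hf.comp (hTm _)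
      fun_prop
    have hU : (fun x : Torus d => Complex.exp (Complex.I *
        ((∑ k ∈ Finset.Icc n₁ n₂, α k * f (torusAut (S ^ (k : ℤ)) x) : ℝ) : ℂ)))
        = fun x => F (torusAut (S ^ n₂) x) := by
      funext x
      simp only [hF, zpow_natCast]
      congr 3
      refine Finset.sum_congr rfl fun k hk => ?_
      rw [torusAut_inv_pow_sub hS (Finset.mem_Icc.1 hk).2]
    have hV : (fun x : Torus d => Complex.exp (Complex.I *
        ((∑ k ∈ Finset.Icc n₃ n₄, β k * f (torusAut (S ^ (k : ℤ)) x) : ℝ) : ℂ)))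
        = fun x => G (torusAut (S ^ (n₃ - n₂)) (torusAut (S ^ n₂) x)) := by
      funext x
      simp only [hG, zpow_natCast]
      congr 3
      refine Finset.sum_congr rfl fun k hk => ?_
      rw [← torusAut_pow_add, ← torusAut_pow_add, add_assoc, Nat.sub_add_cancel h₂₃,
        Nat.sub_add_cancel (Finset.mem_Icc.1 hk).1]
    have hpow : ∀ n : ℕ, IsUnit (S ^ n).det := fun n => by
      rw [Matrix.det_pow]
      exact hS.pow n
    have hcov : covC volume (fun x : Torus d => F (torusAut (S ^ n₂) x))
        (fun x => G (torusAut (S ^ (n₃ - n₂)) (torusAut (S ^ n₂) x)))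
        = (∫ x, F x * G (torusAut (S ^ (n₃ - n₂)) x)) - (∫ x, F x) * ∫ x, G x := by
      have hGT : Measurable fun x => G (torusAut (S ^ (n₃ - n₂)) x) := hGm.comp (hTm _)
      rw [covC, integral_comp_torusAut (hpow n₂)
        (g := fun x => F x * G (torusAut (S ^ (n₃ - n₂)) x)) (hFm.mul hGT).aestronglyMeasurable,
        integral_comp_torusAut (hpow n₂) hFm.aestronglyMeasurable,
        integral_comp_torusAut (hpow n₂) (g := fun x => G (torusAut (S ^ (n₃ - n₂)) x))
          hGT.aestronglyMeasurable,
        integral_comp_torusAut (hpow _) hGm.aestronglyMeasurable]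
    simp only
    rw [hU, hV, hcov]
    set a := ∑ k ∈ Finset.Icc n₁ n₂, |α k| with ha
    set b := ∑ k ∈ Finset.Icc n₃ n₄, |β k| with hb
    have ha0 : 0 ≤ a := Finset.sum_nonneg fun _ _ => abs_nonneg _
    have hb0 : 0 ≤ b := Finset.sum_nonneg fun _ _ => abs_nonneg _
    have hΛs : 1 ≤ Λ ^ (n₄ - n₃) := one_le_pow₀ hΛ
    have hFs : HolderAlongPast S η (a * c) F := fun v e _ hv x => by
      rw [mul_assoc]
      exact norm_exp_sum_sub_le _ _ _ _ fun k _ => abs_past_sub_le hη.le hc hfh hv _ x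
    have hGs : ∀ x y, ‖G x - G y‖ ≤ (b * (c * Λ ^ (n₄ - n₃))) * ‖x - y‖ ^ η := fun x y => by
      rw [mul_assoc]
      refine norm_exp_sum_sub_le _ _ _ _ fun k hk => (hfh _ _).trans ?_
      rw [mul_assoc]
      refine mul_le_mul_of_nonneg_left ?_ hc
      have hk' := Finset.mem_Icc.1 hk
      have h1 : Λ ^ (k - n₃) ≤ Λ ^ (n₄ - n₃) := pow_le_pow_right₀ hΛ (by omega)
      rw [← torusAut_sub]
      calc ‖torusAut (S ^ (k - n₃)) (x - y)‖ ^ η ≤ (Λ ^ (n₄ - n₃) * ‖x - y‖) ^ η := by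
            refine Real.rpow_le_rpow (norm_nonneg _) ((hΛT _ _).trans ?_) hη.le
            gcongr
        _ = (Λ ^ (n₄ - n₃)) ^ η * ‖x - y‖ ^ η := Real.mul_rpow (by positivity) (norm_nonneg _)
        _ ≤ Λ ^ (n₄ - n₃) * ‖x - y‖ ^ η := by
            gcongr
            simpa using Real.rpow_le_rpow_of_exponent_le hΛs hη1
    refine (hdec F G (a * c) (b * (c * Λ ^ (n₄ - n₃))) 1 (n₃ - n₂) (by positivity) (by positivity)
      hFm hGm (fun x => (norm_exp_I_mul_ofReal_eq_one _).le)
      (fun x => (norm_exp_I_mul_ofReal_eq_one _).le) hFs hGs).trans ?_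
    have hfin : C * (a * c + b * (c * Λ ^ (n₄ - n₃)))
        ≤ (C * c + 1) * (1 + a + b) * Λ ^ (n₄ - n₃) := by
      calc C * (a * c + b * (c * Λ ^ (n₄ - n₃)))
          ≤ C * (a * c * Λ ^ (n₄ - n₃) + b * (c * Λ ^ (n₄ - n₃))) := by
            refine mul_le_mul_of_nonneg_left (add_le_add_left ?_ _) hC
            exact le_mul_of_one_le_right (by positivity) hΛs
        _ = C * c * (a + b) * Λ ^ (n₄ - n₃) := by ring
        _ ≤ (C * c + 1) * (1 + a + b) * Λ ^ (n₄ - n₃) := by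
            gcongr <;> linarith
    calc C * (1 * (a * c + b * (c * Λ ^ (n₄ - n₃)))) * ρ ^ (n₃ - n₂)
        = C * (a * c + b * (c * Λ ^ (n₄ - n₃))) * ρ ^ (n₃ - n₂) := by rw [one_mul]
      _ ≤ (C * c + 1) * (1 + a + b) * Λ ^ (n₄ - n₃) * ρ ^ (n₃ - n₂) := by gcongr
      _ = (C * c + 1) * (1 + a + b) * (Λ ^ (n₄ - n₃) * ρ ^ (n₃ - n₂)) := mul_assoc _ _ _

lemma abs_triple_mul_sub_le {b δ x₁ x₂ x₃ y₁ y₂ y₃ : ℝ} (hx₁ : |x₁| ≤ b)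
    (hx₂ : |x₂| ≤ b) (hy₂ : |y₂| ≤ b) (hy₃ : |y₃| ≤ b) (h₁ : |x₁ - y₁| ≤ δ)
    (h₂ : |x₂ - y₂| ≤ δ) (h₃ : |x₃ - y₃| ≤ δ) :
    |x₁ * x₂ * x₃ - y₁ * y₂ * y₃| ≤ 3 * b ^ 2 * δ := by
  have hb : 0 ≤ b := (abs_nonneg _).trans hx₁
  have hδ : 0 ≤ δ := (abs_nonneg _).trans h₁
  have e : x₁ * x₂ * x₃ - y₁ * y₂ * y₃
      = x₁ * x₂ * (x₃ - y₃) + x₁ * y₃ * (x₂ - y₂) + y₂ * y₃ * (x₁ - y₁) := by ring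
  have key : ∀ u v w : ℝ, |u| ≤ b → |v| ≤ b → |w| ≤ δ → |u * v * w| ≤ b ^ 2 * δ := by
    intro u v w hu hv hw
    rw [abs_mul, abs_mul, sq]
    gcongr
  rw [e]
  have := abs_add_three (x₁ * x₂ * (x₃ - y₃)) (x₁ * y₃ * (x₂ - y₂)) (y₂ * y₃ * (x₁ - y₁))
  linarith [key _ _ _ hx₁ hx₂ h₃, key _ _ _ hx₁ hy₃ h₂, key _ _ _ hy₂ hy₃ h₁]

lemma exists_correlation_bounds {d : ℕ} (hd : 0 < d) {S : Matrix (Fin d) (Fin d) ℤ}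
    (hdet : S.det = 1) (hEig : NoRootOfUnityEigenvalue S) {η c b : ℝ} (hη : 0 < η) (hη1 : η ≤ 1)
    (hc : 0 ≤ c) {f : Torus d → ℝ} (hf : Measurable f) (hb : ∀ x, |f x| ≤ b)
    (hfh : ∀ x y, |f x - f y| ≤ c * ‖x - y‖ ^ η) (hcent : ∫ x, f x = 0) :
    ∃ C ρ : ℝ, 0 ≤ C ∧ 0 < ρ ∧ ρ < 1 ∧
      (∀ p : ℕ, |∫ x, f x * f (torusAut (S ^ p) x)| ≤ C * ρ ^ p) ∧
      ∀ i j p : ℕ, |∫ x, f (torusAut (S⁻¹ ^ i) x) * f (torusAut (S⁻¹ ^ j) x) * f x *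
        f (torusAut (S ^ p) x)| ≤ C * ρ ^ p := by
  obtain ⟨C, ρ, hC, hρ0, hρ1, hdec⟩ := exists_decorrelation_bound hd hdet hEig hη hη1
  have hb0 : 0 ≤ b := (abs_nonneg _).trans (hb 0)
  set B := (1 + b) ^ 3 with hB
  have hbB : b ≤ B := by
    have : 0 ≤ b ^ 3 + 3 * b ^ 2 + 2 * b + 1 := by positivity
    rw [hB]
    linarith
  have hbB3 : b ^ 3 ≤ B := pow_le_pow_left₀ hb0 (by linarith) 3
  have hB0 : 0 ≤ B := hb0.trans hbB
  have hreal : ∀ (F : Torus d → ℝ) (A : ℝ) (p : ℕ), 0 ≤ A → Measurable F → (∀ x, |F x| ≤ B) →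
      HolderAlongPast S η A (fun x => (F x : ℂ)) →
      |∫ x, F x * f (torusAut (S ^ p) x)| ≤ C * (B * (A + c)) * ρ ^ p := by
    intro F A p hA hF hFB hFs
    have h := hdec (fun x => (F x : ℂ)) (fun x => (f x : ℂ)) A c B p hA hc
      (Complex.measurable_ofReal.comp hF) (Complex.measurable_ofReal.comp hf)
      (fun x => by simpa using hFB x) (fun x => by simpa using (hb x).trans hbB) hFs
      (fun x y => by
        rw [← Complex.ofReal_sub, Complex.norm_real]
        exact hfh x y)
    have h0 : ∫ x, (f x : ℂ) = 0 := by rw [integral_complex_ofReal, hcent, Complex.ofReal_zero]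
    rw [h0, mul_zero, sub_zero] at h
    simp_rw [← Complex.ofReal_mul] at h
    rwa [integral_complex_ofReal, Complex.norm_real] at h
  have hT : ∀ A : Matrix (Fin d) (Fin d) ℤ, Measurable fun x => f (torusAut A x) := fun A =>
    hf.comp (continuous_torusAut A).measurable
  have hpast0 : ∀ x, f (torusAut (S⁻¹ ^ 0) x) = f x := fun x => by rw [pow_zero, torusAut_one]
  refine ⟨C * (B * (c + c)) + C * (B * (3 * b ^ 2 * c + c)), ρ, by positivity, hρ0, hρ1,
    fun p => ?_, fun i j p => ?_⟩
  · refine (hreal f c p hc hf (fun x => (hb x).trans hbB) fun v e _ hv x => ?_).trans ?_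
    · rw [← Complex.ofReal_sub, Complex.norm_real, Real.norm_eq_abs, ← hpast0, ← hpast0 x]
      exact abs_past_sub_le hη.le hc hfh hv 0 x
    · gcongr
      exact le_add_of_nonneg_right (by positivity)
  · refine (hreal (fun x => f (torusAut (S⁻¹ ^ i) x) * f (torusAut (S⁻¹ ^ j) x) * f x)
      (3 * b ^ 2 * c) p (by positivity) (((hT _).mul (hT _)).mul hf) (fun x => ?_)
      fun v e _ hv x => ?_).trans ?_
    · refine le_trans ?_ hbB3
      rw [abs_mul, abs_mul, pow_succ, sq]
      gcongr <;> exact hb _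
    · rw [← Complex.ofReal_sub, Complex.norm_real, Real.norm_eq_abs, mul_assoc (3 * b ^ 2)]
      refine abs_triple_mul_sub_le (hb _) (hb _) (hb _) (hb _)
        (abs_past_sub_le hη.le hc hfh hv i x) (abs_past_sub_le hη.le hc hfh hv j x) ?_
      rw [← hpast0, ← hpast0 x]
      exact abs_past_sub_le hη.le hc hfh hv 0 x
    · gcongr
      exact le_add_of_nonneg_left (by positivity)

lemma cond4_torusAut {d : ℕ} (hd : 0 < d) {S : Matrix (Fin d) (Fin d) ℤ} (hdet : S.det = 1)
    (hEig : NoRootOfUnityEigenvalue S) {η c b : ℝ} (hη : 0 < η) (hη1 : η ≤ 1)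
    (hc : 0 ≤ c) {f : Torus d → ℝ} (hf : Measurable f) (hb : ∀ x, |f x| ≤ b)
    (hfh : ∀ x y, |f x - f y| ≤ c * ‖x - y‖ ^ η) (hcent : ∫ x, f x = 0) :
    Cond4 (volume : Measure (Torus d)) fun k x => f (torusAut (S ^ k) x) := by
  have hS : IsUnit S.det := by rw [hdet]; exact isUnit_one
  have hdet' : S⁻¹.det = 1 := by rw [Matrix.det_nonsing_inv, hdet, Ring.inverse_one]
  obtain ⟨C₁, ρ₁, hC₁, hρ₁0, hρ₁1, htwo, hfwd⟩ :=
    exists_correlation_bounds hd hdet hEig hη hη1 hc hf hb hfh hcent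
  obtain ⟨C₂, ρ₂, hC₂, hρ₂0, hρ₂1, -, hbwd⟩ :=
    exists_correlation_bounds hd hdet' (hEig.inv hdet) hη hη1 hc hf hb hfh hcent
  rw [Matrix.nonsing_inv_nonsing_inv _ hS] at hbwd
  have hT : ∀ A : Matrix (Fin d) (Fin d) ℤ, Measurable fun x => f (torusAut A x) := fun A =>
    hf.comp (continuous_torusAut A).measurable
  have hpow : ∀ n : ℕ, IsUnit (S ^ n).det := fun n => by
    rw [Matrix.det_pow]
    exact hS.pow n
  have hshift : ∀ (n : ℕ) (A₁ A₂ A₃ : Matrix (Fin d) (Fin d) ℤ),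
      ∫ x, f (torusAut A₁ x) * f (torusAut A₂ x) * f x * f (torusAut A₃ x)
        = ∫ x, f (torusAut A₁ (torusAut (S ^ n) x)) * f (torusAut A₂ (torusAut (S ^ n) x)) *
          f (torusAut (S ^ n) x) * f (torusAut A₃ (torusAut (S ^ n) x)) := fun n A₁ A₂ A₃ =>
    (integral_comp_torusAut (hpow n)
      (g := fun x => f (torusAut A₁ x) * f (torusAut A₂ x) * f x * f (torusAut A₃ x))
      ((((hT _).mul (hT _)).mul hf).mul (hT _)).aestronglyMeasurable).symm
  refine ⟨?_, ?_⟩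
  · have hsum : Summable fun p : ℕ => C₁ * (ρ₁ ^ p + (p : ℝ) ^ 1 * ρ₁ ^ p) :=
      ((summable_geometric_of_lt_one hρ₁0.le hρ₁1).add
        (summable_pow_mul_geometric_of_norm_lt_one 1
          (by rwa [Real.norm_of_nonneg hρ₁0.le]))).mul_left C₁
    refine Summable.of_nonneg_of_le (fun p => by positivity) (fun p => ?_) hsum
    simp only [zpow_zero, zpow_natCast, torusAut_one]
    have h1 : Real.sqrt (1 + (p : ℝ)) ≤ 1 + p := by
      rw [Real.sqrt_le_left (by positivity)]
      nlinarith [(Nat.cast_nonneg p : (0 : ℝ) ≤ p)]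
    calc Real.sqrt (1 + (p : ℝ)) * |∫ x, f x * f (torusAut (S ^ p) x)|
        ≤ (1 + p) * (C₁ * ρ₁ ^ p) := mul_le_mul h1 (htwo p) (abs_nonneg _) (by positivity)
      _ = _ := by ring
  · simp only [zpow_natCast]
    set Q : ℕ → ℕ → ℕ → ℕ → ℝ := fun k₁ k₂ k₃ k₄ => |∫ x, f (torusAut (S ^ k₁) x) *
      f (torusAut (S ^ k₂) x) * f (torusAut (S ^ k₃) x) * f (torusAut (S ^ k₄) x)| with hQ
    have hmax1 : C₁ ≤ max C₁ C₂ := le_max_left _ _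
    have hmax2 : C₂ ≤ max C₁ C₂ := le_max_right _ _
    have hmax3 : ρ₁ ≤ max ρ₁ ρ₂ := le_max_left _ _
    have hmax4 : ρ₂ ≤ max ρ₁ ρ₂ := le_max_right _ _
    have hC0 := hC₁.trans hmax1
    obtain ⟨B, hB⟩ := exists_sum_le_of_gap_bounds (Q := Q) hC0 (hρ₁0.le.trans hmax3)
      (max_lt hρ₁1 hρ₂1) (fun _ _ _ _ => abs_nonneg _)
      (fun a b c e => by
        simp only [hQ]
        congr 2
        funext x
        ring)
      (fun a b c e => by
        simp only [hQ]
        congr 2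
        funext x
        ring)
      (fun a b c e => by
        simp only [hQ]
        congr 2
        funext x
        ring)
      (fun k₁ k₂ k₃ k₄ h₁₂ h₂₃ h₃₄ => by
        have h := hbwd (k₄ - k₂) (k₃ - k₂) (k₂ - k₁)
        rw [hshift k₂] at h
        simp only [← torusAut_pow_add, Nat.sub_add_cancel h₂₃,
          Nat.sub_add_cancel (h₂₃.trans h₃₄), torusAut_inv_pow_sub hS h₁₂] at h
        have he : Q k₁ k₂ k₃ k₄ = |∫ x, f (torusAut (S ^ k₄) x) * f (torusAut (S ^ k₃) x) *
            f (torusAut (S ^ k₂) x) * f (torusAut (S ^ k₁) x)| := by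
          simp only [hQ]
          congr 2
          funext x
          ring
        rw [he]
        refine h.trans ?_
        gcongr)
      (fun k₁ k₂ k₃ k₄ h₁₂ h₂₃ h₃₄ => by
        have h := hfwd (k₃ - k₁) (k₃ - k₂) (k₄ - k₃)
        rw [hshift k₃] at h
        simp only [← torusAut_pow_add, Nat.sub_add_cancel h₃₄,
          torusAut_inv_pow_sub hS h₂₃, torusAut_inv_pow_sub hS (h₁₂.trans h₂₃)] at h
        refine h.trans ?_
        gcongr)
    exact ⟨B, fun N _ => hB N⟩

/-- For an ergodic algebraic automorphism `T` of the torus and a bounded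
centered η-Hölder function `f`, the sequence `ξ_k = f ∘ T^k` satisfies conditions
(3), (4) and (5). -/
theorem statement14 (d : ℕ) (hd : 2 ≤ d) (S : Matrix (Fin d) (Fin d) ℤ) (hdet : S.det = 1)
    (hEig : NoRootOfUnityEigenvalue S) (η : ℝ) (hη : 0 < η)
    (f : Torus d → ℝ) (hfmeas : Measurable f) (hfbdd : ∃ c : ℝ, ∀ x, |f x| ≤ c)
    (hfholder : IsHolder η f)
    (hcent : (∫ x, f x ∂(volume : Measure (Torus d))) = 0) :
    Cond3 (volume : Measure (Torus d))
        (fun (k : ℤ) (x : Torus d) => f (Titer (torusAut S) (torusAut S⁻¹) k x)) ∧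
    Cond4 (volume : Measure (Torus d))
        (fun (k : ℤ) (x : Torus d) => f (Titer (torusAut S) (torusAut S⁻¹) k x)) ∧
    Cond5 (volume : Measure (Torus d))
        (fun (k : ℤ) (x : Torus d) => f (Titer (torusAut S) (torusAut S⁻¹) k x)) := by
  obtain ⟨b, hb⟩ := hfbdd
  obtain ⟨c, hc, hfh⟩ := hfholder.exists_sup_norm hη
  have hd0 : 0 < d := by omega
  have hη0 : 0 < min η 1 := lt_min hη one_pos
  have hη1 : min η 1 ≤ 1 := min_le_right _ _
  have hS : IsUnit S.det := by rw [hdet]; exact isUnit_one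
  simp only [Titer_torusAut]
  exact ⟨cond3_torusAut hS hfmeas hb hcent,
    cond4_torusAut hd0 hdet hEig hη0 hη1 hc hfmeas hb hfh hcent,
    cond5_torusAut hd0 hdet hEig hη0 hη1 hc hfmeas hfh⟩
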